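/- arXiv:math/0509559 — 3 statements merged into one kernel-verified Lean document; each statement's English description precedes it below -/
import Mathlib

section
/- For Lebesgue-almost every x ∈ [0,1], the arithmetic mean of the continued fraction digits diverges: lim_{n→∞} (a_1(x) + ⋯ + a_n(x))/n = ∞. -/
/-!
The Gauss measure, with density `1 / (1 + x)` on `[0, 1)`, is invariant under the Gauss map. Pulling
an integral against it back along the inverse branches `y ↦ 1 / (k + 1 + y)` of the Gauss map turns
it into an average over `k` with weights `(1 + y) / ((k + 1 + y) (k + 2 + y))`: these are the
conditional probabilities that the first digit is `k + 1`, given that the remaining digits are those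
of `y`. They sum to one and are at least `1 / ((k + 2) (k + 3))`, whatever `y` is, so each digit has
infinite conditional mean, uniformly in the digits that follow it.

Consequently the Laplace transform `∫ exp (-t (a₁ + ⋯ + aₙ))` is at most a constant times `ρ ^ n`
with `ρ = 1 - ∑_{k < N} (1 - exp (-t (k + 1))) / ((k + 2) (k + 3))`. Given `L`, a large `N` and a
small `t > 0` make `exp (t L) * ρ < 1`. By Chernoff's bound the probability of
`a₁ + ⋯ + aₙ ≤ L n` then decays geometrically, and the Borel–Cantelli lemma concludes, with no
appeal to the ergodicity of the Gauss map.
-/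

open MeasureTheory Filter

/-- The Gauss map `G(x) = 1/x - ⌊1/x⌋` (with `G 0 = 0`). -/
noncomputable def gaussMap (x : ℝ) : ℝ := if x = 0 then 0 else Int.fract (1 / x)

/-- The `n`-th continued fraction digit (`n ≥ 1`): `a_n(x) = ⌊1 / G^{n-1}(x)⌋`. -/
noncomputable def cfDigit (x : ℝ) (n : ℕ) : ℤ := ⌊1 / (gaussMap^[n - 1] x)⌋

open Set Topology
open scoped ENNReal

/-! ### Chernoff bounds and linear growth -/

section Chernoff

variable {Ω : Type*} [MeasurableSpace Ω] {μ : Measure Ω}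

lemma measure_le_le_exp_mul_lintegral_exp_neg {X : Ω → ℝ} (hX : AEMeasurable X μ) {t : ℝ}
    (ht : 0 ≤ t) (a : ℝ) :
    μ {ω | X ω ≤ a} ≤
      ENNReal.ofReal (Real.exp (t * a)) * ∫⁻ ω, ENNReal.ofReal (Real.exp (-(t * X ω))) ∂μ := by
  have hmul : AEMeasurable (fun ω => ENNReal.ofReal (Real.exp (t * a)) *
      ENNReal.ofReal (Real.exp (-(t * X ω)))) μ := by fun_prop
  rw [← lintegral_const_mul' _ _ ENNReal.ofReal_ne_top]
  calc μ {ω | X ω ≤ a}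
      ≤ μ {ω | 1 ≤ ENNReal.ofReal (Real.exp (t * a)) *
          ENNReal.ofReal (Real.exp (-(t * X ω)))} := by
        refine measure_mono fun ω (hω : X ω ≤ a) => ?_
        rw [mem_ofPred_eq, ← ENNReal.ofReal_mul (Real.exp_nonneg _), ← Real.exp_add,
          ENNReal.one_le_ofReal, Real.one_le_exp_iff]
        linarith [mul_le_mul_of_nonneg_left hω ht]
    _ ≤ _ := by simpa using mul_meas_ge_le_lintegral₀ hmul 1

lemma ae_eventually_mul_lt_of_lintegral_exp_neg_le {S : ℕ → Ω → ℝ}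
    (hS : ∀ n, AEMeasurable (S n) μ) {t L r : ℝ} (ht : 0 ≤ t) (hr : Real.exp (t * L) * r < 1)
    {C : ℝ≥0∞} (hC : C ≠ ∞)
    (hle : ∀ n, ∫⁻ ω, ENNReal.ofReal (Real.exp (-(t * S n ω))) ∂μ ≤ ENNReal.ofReal r ^ n * C) :
    ∀ᵐ ω ∂μ, ∀ᶠ n : ℕ in atTop, L * n < S n ω := by
  have hbound (n : ℕ) : μ {ω | S n ω ≤ L * n} ≤ ENNReal.ofReal (Real.exp (t * L) * r) ^ n * C := by
    have hexp : Real.exp (t * (L * n)) = Real.exp (t * L) ^ n := by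
      rw [← Real.exp_nat_mul]; ring_nf
    calc μ {ω | S n ω ≤ L * n}
        ≤ ENNReal.ofReal (Real.exp (t * (L * n))) * (ENNReal.ofReal r ^ n * C) :=
          (measure_le_le_exp_mul_lintegral_exp_neg (hS n) ht _).trans (by gcongr; exact hle n)
      _ = ENNReal.ofReal (Real.exp (t * L) * r) ^ n * C := by
          rw [hexp, ENNReal.ofReal_pow (Real.exp_nonneg _), ENNReal.ofReal_mul (Real.exp_nonneg _),
            mul_pow, mul_assoc]
  have hsum : ∑' n : ℕ, μ {ω | S n ω ≤ L * n} ≠ ∞ := by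
    refine ne_top_of_le_ne_top ?_ (ENNReal.tsum_le_tsum hbound)
    rw [ENNReal.tsum_mul_right, ENNReal.tsum_geometric]
    refine ENNReal.mul_ne_top (ENNReal.inv_ne_top.2 (tsub_pos_of_lt ?_).ne') hC
    exact ENNReal.ofReal_lt_one.2 hr
  filter_upwards [ae_eventually_notMem hsum] with ω hω
  filter_upwards [hω] with n hn using not_le.1 hn

end Chernoff

lemma tendsto_div_natCast_atTop_of_eventually_mul_lt {u : ℕ → ℝ}
    (hu : ∀ L : ℕ, ∀ᶠ n : ℕ in atTop, (L : ℝ) * n < u n) :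
    Tendsto (fun n : ℕ => u n / n) atTop atTop := by
  refine tendsto_atTop.2 fun b => ?_
  obtain ⟨L, hL⟩ := exists_nat_ge b
  filter_upwards [hu L, eventually_gt_atTop 0] with n hn hn0
  exact hL.trans ((le_div_iff₀ (Nat.cast_pos.2 hn0)).2 hn.le)

/-! ### Laplace transforms of discrete distributions -/

lemma tsum_mul_le_one_sub_sum {ι : Type*} {p q e : ι → ℝ} {s : Finset ι} (hp : ∀ i, 0 ≤ p i)
    (hsum : HasSum p 1) (hqp : ∀ i ∈ s, q i ≤ p i) (he₀ : ∀ i, 0 ≤ e i) (he₁ : ∀ i, e i ≤ 1) :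
    ∑' i, p i * e i ≤ 1 - ∑ i ∈ s, q i * (1 - e i) := by
  have hpe : Summable fun i => p i * e i :=
    hsum.summable.of_nonneg_of_le (fun i => mul_nonneg (hp i) (he₀ i))
      fun i => mul_le_of_le_one_right (hp i) (he₁ i)
  have hcompl : HasSum (fun i => p i * (1 - e i)) (1 - ∑' i, p i * e i) := by
    simpa only [mul_sub, mul_one] using hsum.sub hpe.hasSum
  have hle : ∑ i ∈ s, q i * (1 - e i) ≤ 1 - ∑' i, p i * e i :=
    calc ∑ i ∈ s, q i * (1 - e i)
        ≤ ∑ i ∈ s, p i * (1 - e i) :=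
          Finset.sum_le_sum fun i hi =>
            mul_le_mul_of_nonneg_right (hqp i hi) (sub_nonneg.2 (he₁ i))
      _ ≤ 1 - ∑' i, p i * e i :=
          sum_le_hasSum s (fun i _ => mul_nonneg (hp i) (sub_nonneg.2 (he₁ i))) hcompl
  linarith

lemma eventually_lt_nhdsGT_of_hasDerivWithinAt_neg {f : ℝ → ℝ} {f' x : ℝ}
    (hf : HasDerivWithinAt f f' (Ioi x) x) (hf' : f' < 0) : ∀ᶠ y in 𝓝[>] x, f y < f x := by
  have hslope : ∀ᶠ y in 𝓝[>] x, slope f x y < 0 :=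
    hf.limsup_slope_le' self_notMem_Ioi hf'
  filter_upwards [hslope, self_mem_nhdsWithin] with y hy hxy
  rw [slope_def_field, div_lt_iff₀ (sub_pos.2 hxy), zero_mul] at hy
  exact sub_neg.1 hy

lemma exists_pos_exp_mul_one_sub_sum_lt_one {ι : Type*} {s : Finset ι} {q m : ι → ℝ} {L : ℝ}
    (hL : L < ∑ i ∈ s, q i * m i) :
    ∃ t > 0, Real.exp (t * L) * (1 - ∑ i ∈ s, q i * (1 - Real.exp (-(t * m i)))) < 1 := by
  have hterm (i : ι) : HasDerivAt (fun t => q i * (1 - Real.exp (-(t * m i)))) (q i * m i) 0 := by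
    refine (((((hasDerivAt_id' (0 : ℝ)).mul_const (m i)).fun_neg.exp).const_sub 1).const_mul
      (q i)).congr_deriv ?_
    simp
  have hderiv : HasDerivAt
      (fun t => Real.exp (t * L) * (1 - ∑ i ∈ s, q i * (1 - Real.exp (-(t * m i)))))
      (L - ∑ i ∈ s, q i * m i) 0 := by
    refine ((((hasDerivAt_id' (0 : ℝ)).mul_const L).exp).fun_mul
      ((HasDerivAt.fun_sum fun i _ => hterm i).const_sub 1)).congr_deriv ?_
    simp [sub_eq_add_neg]
  obtain ⟨t, hlt, ht⟩ := ((eventually_lt_nhdsGT_of_hasDerivWithinAt_neg hderiv.hasDerivWithinAt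
    (sub_neg.2 hL)).and self_mem_nhdsWithin).exists
  exact ⟨t, ht, by simpa using hlt⟩

/-! ### Inverse branches of the Gauss map -/

/-- The inverse branch of the Gauss map on the numbers with first digit `k + 1`, a bijection from
`[0, 1)` onto `(1 / (k + 2), 1 / (k + 1)]`. -/
noncomputable def gaussBranch (k : ℕ) (y : ℝ) : ℝ := 1 / (k + 1 + y)

lemma gaussMap_gaussBranch (k : ℕ) {y : ℝ} (hy : y ∈ Ico (0 : ℝ) 1) :
    gaussMap (gaussBranch k y) = y := by
  have hy₀ := hy.1
  have hne : 1 / ((k : ℝ) + 1 + y) ≠ 0 := by positivity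
  rw [gaussMap, gaussBranch, if_neg hne, one_div_one_div, ← Nat.cast_add_one,
    Int.fract_natCast_add, Int.fract_eq_self.2 hy]

lemma cfDigit_gaussBranch_one (k : ℕ) {y : ℝ} (hy : y ∈ Ico (0 : ℝ) 1) :
    cfDigit (gaussBranch k y) 1 = k + 1 := by
  simp only [cfDigit, gaussBranch, Nat.sub_self, Function.iterate_zero, id_eq, one_div_one_div]
  rw [← Nat.cast_add_one, Int.floor_natCast_add, Int.floor_eq_zero_iff.2 hy, add_zero,
    Nat.cast_add_one]

lemma injOn_gaussBranch (k : ℕ) : InjOn (gaussBranch k) (Ico 0 1) :=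
  LeftInvOn.injOn fun _ => gaussMap_gaussBranch k

lemma pairwise_disjoint_image_gaussBranch :
    Pairwise (Function.onFun Disjoint fun k => gaussBranch k '' Ico 0 1) := by
  intro k l hkl
  rw [Function.onFun, Set.disjoint_left]
  rintro _ ⟨y, hy, rfl⟩ ⟨z, hz, hzy⟩
  have hdigit := congrArg (cfDigit · 1) hzy
  simp only [cfDigit_gaussBranch_one _ hy, cfDigit_gaussBranch_one _ hz] at hdigit
  omega

lemma iUnion_image_gaussBranch : ⋃ k, gaussBranch k '' Ico 0 1 = Ioc 0 1 := by
  ext x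
  simp only [mem_iUnion, mem_image]
  constructor
  · rintro ⟨k, y, ⟨hy₀, -⟩, rfl⟩
    exact ⟨by unfold gaussBranch; positivity,
      div_le_one_of_le₀ (by linarith [k.cast_nonneg (α := ℝ)]) (by positivity)⟩
  · rintro ⟨hx₀, hx₁⟩
    have hfloor : 1 ≤ ⌊1 / x⌋ := Int.le_floor.2 (by simpa using one_le_one_div hx₀ hx₁)
    obtain ⟨k, hk⟩ := Int.eq_ofNat_of_zero_le (sub_nonneg.2 hfloor)
    refine ⟨k, Int.fract (1 / x), ⟨Int.fract_nonneg _, Int.fract_lt_one _⟩, ?_⟩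
    have hk' : (k : ℝ) + 1 = ⌊1 / x⌋ := by exact_mod_cast (sub_eq_iff_eq_add.1 hk).symm
    rw [gaussBranch, hk', Int.floor_add_fract, one_div_one_div]

lemma hasDerivAt_gaussBranch (k : ℕ) {y : ℝ} (hy : 0 ≤ y) :
    HasDerivAt (gaussBranch k) (-(1 / (k + 1 + y) ^ 2)) y := by
  have hne : (k : ℝ) + 1 + y ≠ 0 := by positivity
  refine ((((hasDerivAt_id' y).const_add ((k : ℝ) + 1)).fun_inv hne).congr_deriv
    (neg_div _ _)).congr_of_eventuallyEq (.of_forall fun z => ?_)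
  rw [gaussBranch, one_div]

lemma measurable_gaussBranch (k : ℕ) : Measurable (gaussBranch k) := by
  unfold gaussBranch
  fun_prop

lemma setLIntegral_Ico_eq_tsum_gaussBranch (f : ℝ → ℝ≥0∞) :
    ∫⁻ x in Ico 0 1, f x =
      ∑' k : ℕ, ∫⁻ y in Ico (0 : ℝ) 1,
        ENNReal.ofReal (1 / (k + 1 + y) ^ 2) * f (gaussBranch k y) := by
  have hderiv (k : ℕ) (y : ℝ) (hy : y ∈ Ico (0 : ℝ) 1) :=
    (hasDerivAt_gaussBranch k hy.1).hasDerivWithinAt (s := Ico 0 1)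
  rw [setLIntegral_congr Ico_ae_eq_Ioc, ← iUnion_image_gaussBranch,
    lintegral_iUnion (fun k => measurableSet_Ico.image_of_continuousOn_injOn
      (fun y hy => (hderiv k y hy).continuousWithinAt) (injOn_gaussBranch k))
      pairwise_disjoint_image_gaussBranch]
  refine tsum_congr fun k => ?_
  rw [lintegral_image_eq_lintegral_abs_deriv_mul measurableSet_Ico (hderiv k) (injOn_gaussBranch k)]
  simp only [abs_neg, abs_div, abs_one, abs_sq]

/-! ### The Gauss measure and its conditional digit probabilities -/

/-- The Gauss measure on `[0, 1)`, without the factor `1 / log 2` that would make it a probability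
measure. -/
noncomputable def gaussMeasure : Measure ℝ :=
  (volume.restrict (Ico 0 1)).withDensity fun x => ENNReal.ofReal (1 / (1 + x))

/-- The conditional probability, under the normalised Gauss measure, that the first digit of `x` is
`k + 1` given that the Gauss map sends `x` to `y`. -/
noncomputable def gaussWeight (k : ℕ) (y : ℝ) : ℝ := (1 + y) / ((k + 1 + y) * (k + 2 + y))

lemma lintegral_gaussMeasure {f : ℝ → ℝ≥0∞} (hf : Measurable f) :
    ∫⁻ x, f x ∂gaussMeasure = ∫⁻ x in Ico (0 : ℝ) 1, ENNReal.ofReal (1 / (1 + x)) * f x :=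
  lintegral_withDensity_eq_lintegral_mul _ (by fun_prop) hf

lemma ae_gaussMeasure_mem_Ico : ∀ᵐ x ∂gaussMeasure, x ∈ Ico (0 : ℝ) 1 :=
  (withDensity_absolutelyContinuous _ _).ae_le (ae_restrict_mem measurableSet_Ico)

lemma restrict_Ico_absolutelyContinuous_gaussMeasure :
    volume.restrict (Ico 0 1) ≪ gaussMeasure := by
  refine withDensity_absolutelyContinuous' (by fun_prop) ?_
  filter_upwards [ae_restrict_mem measurableSet_Ico] with x hx
  have hx₀ := hx.1
  exact (ENNReal.ofReal_pos.2 (by positivity)).ne'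

instance : IsFiniteMeasure gaussMeasure := by
  refine isFiniteMeasure_withDensity (ne_top_of_le_ne_top ENNReal.one_ne_top ?_)
  calc ∫⁻ x in Ico (0 : ℝ) 1, ENNReal.ofReal (1 / (1 + x))
      ≤ ∫⁻ _ in Ico (0 : ℝ) 1, 1 := by
        refine setLIntegral_mono' measurableSet_Ico fun x hx => ENNReal.ofReal_le_one.2 ?_
        exact div_le_one_of_le₀ (by linarith [hx.1]) (by linarith [hx.1])
    _ = 1 := by simp

lemma gaussWeight_nonneg (k : ℕ) {y : ℝ} (hy : 0 ≤ y) : 0 ≤ gaussWeight k y := by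
  unfold gaussWeight
  positivity

lemma measurable_gaussWeight (k : ℕ) : Measurable (gaussWeight k) := by
  unfold gaussWeight
  fun_prop

lemma hasSum_gaussWeight {y : ℝ} (hy : 0 ≤ y) : HasSum (gaussWeight · y) 1 := by
  rw [hasSum_iff_tendsto_nat_of_nonneg fun k => gaussWeight_nonneg k hy]
  have htelescope (n : ℕ) :
      ∑ k ∈ Finset.range n, gaussWeight k y = 1 - (1 + y) / (n + (1 + y)) := by
    induction n with
    | zero => simp [div_self (by positivity : 1 + y ≠ 0)]
    | succ n ih =>
      rw [Finset.sum_range_succ, ih, gaussWeight]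
      push_cast
      field_simp
      ring
  have htail : Tendsto (fun n : ℕ => (1 + y) / (n + (1 + y))) atTop (𝓝 0) :=
    (tendsto_atTop_add_const_right _ _ tendsto_natCast_atTop_atTop).const_div_atTop _
  simpa only [htelescope, sub_zero] using htail.const_sub 1

lemma one_div_le_gaussWeight (k : ℕ) {y : ℝ} (hy : y ∈ Ico (0 : ℝ) 1) :
    1 / (((k : ℝ) + 2) * (k + 3)) ≤ gaussWeight k y := by
  obtain ⟨hy₀, hy₁⟩ := hy
  exact div_le_div₀ (by linarith) (by linarith) (by positivity)
    (mul_le_mul (by linarith) (by linarith) (by positivity) (by positivity))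

lemma one_div_sq_mul_one_div_one_add_gaussBranch (k : ℕ) {y : ℝ} (hy : 0 ≤ y) :
    1 / ((k : ℝ) + 1 + y) ^ 2 * (1 / (1 + gaussBranch k y)) =
      1 / (1 + y) * gaussWeight k y := by
  unfold gaussBranch gaussWeight
  field_simp
  ring

lemma lintegral_gaussMeasure_eq_lintegral_tsum {f : ℝ → ℝ≥0∞} (hf : Measurable f) :
    ∫⁻ x, f x ∂gaussMeasure =
      ∫⁻ y, ∑' k, ENNReal.ofReal (gaussWeight k y) * f (gaussBranch k y) ∂gaussMeasure := by
  have hmeas (k : ℕ) :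
      Measurable fun y => ENNReal.ofReal (gaussWeight k y) * f (gaussBranch k y) :=
    (measurable_gaussWeight k).ennreal_ofReal.mul (hf.comp (measurable_gaussBranch k))
  rw [lintegral_tsum fun k => (hmeas k).aemeasurable, lintegral_gaussMeasure hf,
    setLIntegral_Ico_eq_tsum_gaussBranch]
  refine tsum_congr fun k => ?_
  rw [lintegral_gaussMeasure (hmeas k)]
  refine setLIntegral_congr_fun measurableSet_Ico fun y hy => ?_
  have hy₀ := hy.1
  simp only [← mul_assoc]
  rw [← ENNReal.ofReal_mul (by positivity), ← ENNReal.ofReal_mul (by positivity),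
    one_div_sq_mul_one_div_one_add_gaussBranch k hy₀]

/-! ### The Laplace transform of the digit sums -/

/-- The sum `a_1(x) + ⋯ + a_n(x)` of the first `n` continued fraction digits, as a real number. -/
noncomputable def cfDigitSum (x : ℝ) (n : ℕ) : ℝ := ∑ i ∈ Finset.range n, (cfDigit x (i + 1) : ℝ)

lemma measurable_gaussMap : Measurable gaussMap :=
  .ite (measurableSet_singleton 0) measurable_const (measurable_const.div measurable_id).fract

lemma measurable_cfDigit (n : ℕ) : Measurable (cfDigit · n) :=
  (measurable_const.div (measurable_gaussMap.iterate _)).floor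

lemma measurable_cfDigitSum (n : ℕ) : Measurable (cfDigitSum · n) :=
  Finset.measurable_fun_sum _ fun i _ => (measurable_from_top (f := ((↑) : ℤ → ℝ))).comp
    (measurable_cfDigit (i + 1))

lemma cfDigitSum_succ (x : ℝ) (n : ℕ) :
    cfDigitSum x (n + 1) = cfDigit x 1 + cfDigitSum (gaussMap x) n :=
  birkhoffSum_succ' gaussMap (fun x => (cfDigit x 1 : ℝ)) n x

lemma cfDigitSum_gaussBranch_succ (k n : ℕ) {y : ℝ} (hy : y ∈ Ico (0 : ℝ) 1) :
    cfDigitSum (gaussBranch k y) (n + 1) = k + 1 + cfDigitSum y n := by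
  rw [cfDigitSum_succ, cfDigit_gaussBranch_one k hy, gaussMap_gaussBranch k hy]
  push_cast
  rfl

lemma tsum_gaussWeight_mul_exp_neg_le (N : ℕ) {t y : ℝ} (ht : 0 ≤ t) (hy : y ∈ Ico (0 : ℝ) 1) :
    ∑' k : ℕ, ENNReal.ofReal (gaussWeight k y * Real.exp (-(t * (k + 1)))) ≤
      ENNReal.ofReal (1 - ∑ k ∈ Finset.range N,
        1 / (((k : ℝ) + 2) * (k + 3)) * (1 - Real.exp (-(t * (k + 1))))) := by
  have hw (k : ℕ) : 0 ≤ gaussWeight k y := gaussWeight_nonneg k hy.1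
  have hexp (k : ℕ) : Real.exp (-(t * (k + 1))) ≤ 1 :=
    Real.exp_le_one_iff.2 (neg_nonpos.2 (by positivity))
  rw [← ENNReal.ofReal_tsum_of_nonneg (fun k => mul_nonneg (hw k) (Real.exp_nonneg _))
    ((hasSum_gaussWeight hy.1).summable.of_nonneg_of_le
      (fun k => mul_nonneg (hw k) (Real.exp_nonneg _))
      fun k => mul_le_of_le_one_right (hw k) (hexp k))]
  exact ENNReal.ofReal_le_ofReal <| tsum_mul_le_one_sub_sum hw (hasSum_gaussWeight hy.1)
    (fun k _ => one_div_le_gaussWeight k hy) (fun _ => Real.exp_nonneg _) hexp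

lemma lintegral_exp_neg_cfDigitSum_succ (t : ℝ) (n : ℕ) :
    ∫⁻ x, ENNReal.ofReal (Real.exp (-(t * cfDigitSum x (n + 1)))) ∂gaussMeasure =
      ∫⁻ y, (∑' k : ℕ, ENNReal.ofReal (gaussWeight k y * Real.exp (-(t * (k + 1))))) *
        ENNReal.ofReal (Real.exp (-(t * cfDigitSum y n))) ∂gaussMeasure := by
  have hS := measurable_cfDigitSum (n + 1)
  rw [lintegral_gaussMeasure_eq_lintegral_tsum (by fun_prop)]
  refine lintegral_congr_ae ?_
  filter_upwards [ae_gaussMeasure_mem_Ico] with y hy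
  rw [← ENNReal.tsum_mul_right]
  refine tsum_congr fun k => ?_
  have hw := gaussWeight_nonneg k hy.1
  rw [cfDigitSum_gaussBranch_succ k n hy, ← ENNReal.ofReal_mul hw,
    ← ENNReal.ofReal_mul (mul_nonneg hw (Real.exp_nonneg _)), mul_assoc, ← Real.exp_add]
  ring_nf

lemma lintegral_exp_neg_cfDigitSum_le (N : ℕ) {t : ℝ} (ht : 0 ≤ t) (n : ℕ) :
    ∫⁻ x, ENNReal.ofReal (Real.exp (-(t * cfDigitSum x n))) ∂gaussMeasure ≤
      ENNReal.ofReal (1 - ∑ k ∈ Finset.range N,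
        1 / (((k : ℝ) + 2) * (k + 3)) * (1 - Real.exp (-(t * (k + 1))))) ^ n *
          gaussMeasure univ := by
  induction n with
  | zero => simp [cfDigitSum]
  | succ n ih =>
    rw [lintegral_exp_neg_cfDigitSum_succ, pow_succ', mul_assoc]
    refine le_trans ?_ (mul_le_mul_right ih _)
    rw [← lintegral_const_mul' _ _ ENNReal.ofReal_ne_top]
    refine lintegral_mono_ae ?_
    filter_upwards [ae_gaussMeasure_mem_Ico] with y hy
    gcongr
    exact tsum_gaussWeight_mul_exp_neg_le N ht hy

lemma tendsto_sum_one_div_mul_add_one_atTop :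
    Tendsto (fun N : ℕ => ∑ k ∈ Finset.range N, 1 / (((k : ℝ) + 2) * (k + 3)) * (k + 1))
      atTop atTop := by
  refine tendsto_atTop_mono (fun N => ?_)
    (Real.tendsto_sum_range_one_div_nat_succ_atTop.const_mul_atTop (by norm_num : (0 : ℝ) < 1 / 6))
  rw [Finset.mul_sum]
  refine Finset.sum_le_sum fun k _ => ?_
  rw [div_mul_div_comm, div_mul_eq_mul_div, div_le_div_iff₀ (by positivity) (by positivity)]
  nlinarith [k.cast_nonneg (α := ℝ)]

lemma ae_eventually_mul_lt_cfDigitSum (L : ℝ) :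
    ∀ᵐ x ∂gaussMeasure, ∀ᶠ n : ℕ in atTop, L * n < cfDigitSum x n := by
  obtain ⟨N, hN⟩ := (tendsto_sum_one_div_mul_add_one_atTop.eventually_gt_atTop L).exists
  obtain ⟨t, ht, hlt⟩ := exists_pos_exp_mul_one_sub_sum_lt_one hN
  exact ae_eventually_mul_lt_of_lintegral_exp_neg_le
    (fun n => (measurable_cfDigitSum n).aemeasurable) ht.le hlt (measure_ne_top _ _)
    (lintegral_exp_neg_cfDigitSum_le N ht.le)

/-- For Lebesgue-a.e. `x ∈ [0,1]`, the arithmetic mean of the continued fraction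
digits diverges: `(a_1(x) + ⋯ + a_n(x))/n → ∞`. -/
theorem cf_digit_mean_tendsto_atTop :
    ∀ᵐ x ∂(volume.restrict (Set.Icc (0 : ℝ) 1)),
      Tendsto (fun n : ℕ => (∑ i ∈ Finset.range n, (cfDigit x (i + 1) : ℝ)) / n)
        atTop atTop := by
  rw [← Measure.restrict_congr_set Ico_ae_eq_Icc]
  refine restrict_Ico_absolutelyContinuous_gaussMeasure.ae_le ?_
  filter_upwards [ae_all_iff.2 fun L : ℕ => ae_eventually_mul_lt_cfDigitSum L] with x hx
  exact tendsto_div_natCast_atTop_of_eventually_mul_lt hx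
end

section
/- Let (X,T,A,μ) be a conservative ergodic measure preserving system with μ σ-finite infinite, A a uniform set for f ∈ P_μ with normalizing sequence (b_n), and suppose the wandering rate (W_n) is regularly varying with exponent 1-α for some α ∈ (0,1], and the sequence (T̂^n f restricted to A) is decreasing. Then W_n · T̂^n f → 1/(Γ(α)Γ(2-α)) μ-a.e. uniformly on A; in particular A is uniformly returning for f. -/
open MeasureTheory Filter

/-!
Decomposing orbits at their last visit to `A` gives a renewal equation: if `ŵ(s, x)` and `U(s, x)`
are the generating functions of the indicators of the points of `A` that do not return up to time
`n` and of `T̂ⁿ f(x)`, then `(1 - s) ∫_A ŵ(s, x) U(s, x) dμ(x)` tends to `∫ f = 1` as `s → 1`,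
because almost every orbit reaches `A`. Uniformity of `A` makes `U(s, x) / U(s, x₀)` tend to `1`
uniformly in `x`, so `U` can be taken out of the integral: `(1 - s) · ŵ(s) · U(s, x) → 1`, where
`ŵ(s) = ∫_A ŵ(s, x) dμ(x)` is the generating function of the increments of `(W_n)`.

Regular variation of `(W_n)` then yields, for each `c > 0`, the limit at `c` of the Laplace
transforms of `t ↦ W_n T̂^⌊tn⌋ f(x)`, namely that of `t ^ (α - 1) / (Γ(α) Γ(2 - α))`. The method of
moments in the variable `e⁻ᵗ` turns this into convergence of integrals over arbitrarily short
windows next to `t = 1`, and monotonicity turns these into convergence at `t = 1`. All limits are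
taken along the product of a filter with the principal filter of the set where `x` ranges, which
makes them uniform in `x`.
-/

section GeneratingFunctions

open scoped Topology
open Finset (range)

/-- The generating function `∑ aₙ sⁿ` of a real sequence; it takes the value `0` where the series
diverges. -/
noncomputable def genFun (a : ℕ → ℝ) (s : ℝ) : ℝ := ∑' n, a n * s ^ n

variable {a : ℕ → ℝ} {s : ℝ}

theorem abs_lt_one_of_mem_Ioo (hs : s ∈ Set.Ioo (0 : ℝ) 1) : |s| < 1 :=
  abs_lt.2 ⟨neg_one_lt_zero.trans hs.1, hs.2⟩

theorem summable_mul_pow_of_abs_le {C : ℝ} (ha : ∀ n, |a n| ≤ C) (hs : |s| < 1) :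
    Summable fun n => a n * s ^ n := by
  refine .of_norm_bounded ((summable_geometric_of_abs_lt_one (abs_abs s ▸ hs)).mul_left C)
    fun n => ?_
  rw [Real.norm_eq_abs, abs_mul, abs_pow]
  gcongr
  exact ha n

theorem summable_mul_pow_of_tendsto {ℓ : ℝ} (ha : Tendsto a atTop (𝓝 ℓ)) (hs : |s| < 1) :
    Summable fun n => a n * s ^ n := by
  obtain ⟨C, hC⟩ := (Metric.isBounded_range_of_tendsto a ha).exists_norm_le
  exact summable_mul_pow_of_abs_le (fun n => hC _ ⟨n, rfl⟩) hs

theorem summable_mul_pow_of_antitone_of_nonneg (ha : Antitone a) (ha0 : ∀ n, 0 ≤ a n)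
    (hs : |s| < 1) : Summable fun n => a n * s ^ n :=
  summable_mul_pow_of_abs_le (fun n => (abs_of_nonneg (ha0 n)).trans_le (ha n.zero_le)) hs

theorem apply_zero_le_genFun (ha : ∀ n, 0 ≤ a n) (hs : 0 ≤ s)
    (hsum : Summable fun n => a n * s ^ n) : a 0 ≤ genFun a s := by
  simpa [genFun] using hsum.le_tsum 0 fun n _ => mul_nonneg (ha n) (pow_nonneg hs n)

theorem sum_range_succ_mul_pow_eq (a : ℕ → ℝ) (s : ℝ) (n : ℕ) :
    (∑ k ∈ range (n + 1), a k) * s ^ n = ∑ k ∈ range (n + 1), a k * s ^ k * s ^ (n - k) := by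
  rw [Finset.sum_mul]
  refine Finset.sum_congr rfl fun k hk => ?_
  rw [mul_assoc, ← pow_add, Nat.add_sub_cancel' (Finset.mem_range_succ_iff.1 hk)]

theorem summable_sum_range_succ_mul_pow (hs : |s| < 1) (ha : Summable fun n => a n * s ^ n) :
    Summable fun n => (∑ k ∈ range (n + 1), a k) * s ^ n := by
  simp only [sum_range_succ_mul_pow_eq]
  exact (summable_norm_sum_mul_range_of_summable_norm ha.norm
    (summable_geometric_of_abs_lt_one hs).norm).of_norm

theorem genFun_eq_one_sub_mul_genFun_sum_range_succ (hs : |s| < 1)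
    (ha : Summable fun n => a n * s ^ n) :
    genFun a s = (1 - s) * genFun (fun n => ∑ k ∈ range (n + 1), a k) s := by
  have hs' : 1 - s ≠ 0 := by linarith [(abs_lt.1 hs).2]
  simp only [genFun, sum_range_succ_mul_pow_eq]
  rw [← tsum_mul_tsum_eq_tsum_sum_range_of_summable_norm ha.norm
    (summable_geometric_of_abs_lt_one hs).norm, tsum_geometric_of_abs_lt_one hs]
  field_simp

theorem eventually_mem_Ioo_nhdsLT_one : ∀ᶠ s : ℝ in 𝓝[<] 1, s ∈ Set.Ioo (0 : ℝ) 1 :=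
  Ioo_mem_nhdsLT one_pos

theorem tendsto_one_sub_mul_genFun {ℓ : ℝ} (ha : Tendsto a atTop (𝓝 ℓ)) :
    Tendsto (fun s => (1 - s) * genFun a s) (𝓝[<] 1) (𝓝 ℓ) := by
  have ha' : Tendsto (fun n => a (n + 1)) atTop (𝓝 ℓ) := (tendsto_add_atTop_iff_nat 1).2 ha
  have habel := Real.tendsto_tsum_powerSeries_nhdsWithin_lt
    (f := fun n => a (n + 1) - a n) (l := ℓ - a 0) <| by
      simpa only [Finset.sum_range_sub] using ha.sub_const (a 0)
  have hid : Tendsto (fun s : ℝ => s) (𝓝[<] 1) (𝓝 1) := tendsto_id.mono_left nhdsWithin_le_nhds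
  have hlim := (hid.mul habel).const_add (a 0)
  rw [one_mul, add_sub_cancel] at hlim
  refine hlim.congr' ?_
  filter_upwards [eventually_mem_Ioo_nhdsLT_one] with s hs
  have hs' := abs_lt_one_of_mem_Ioo hs
  have hsum := summable_mul_pow_of_tendsto ha hs'
  have hsplit : genFun a s = a 0 + s * genFun (fun n => a (n + 1)) s := by
    rw [genFun, hsum.tsum_eq_zero_add, genFun, ← tsum_mul_left]
    simp only [pow_zero, mul_one, pow_succ]
    congr 2 with n
    ring
  have hdiff : ∑' n, (a (n + 1) - a n) * s ^ n =
      genFun (fun n => a (n + 1)) s - genFun a s := by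
    simp only [sub_mul]
    exact (summable_mul_pow_of_tendsto ha' hs').tsum_sub hsum
  rw [hdiff]
  linear_combination -hsplit

theorem abs_genFun_sub_genFun_le {b c : ℕ → ℝ} (hs0 : 0 ≤ s) (hs1 : s < 1)
    (ha : Summable fun n => a n * s ^ n) (hb : Summable fun n => b n * s ^ n)
    (hc : Summable fun n => c n * s ^ n)
    (habc : ∀ n, |∑ k ∈ range (n + 1), a k - ∑ k ∈ range (n + 1), b k| ≤ c n) :
    |genFun a s - genFun b s| ≤ (1 - s) * genFun c s := by
  have hs : |s| < 1 := by rwa [abs_of_nonneg hs0]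
  rw [genFun_eq_one_sub_mul_genFun_sum_range_succ hs ha,
    genFun_eq_one_sub_mul_genFun_sum_range_succ hs hb, ← mul_sub, abs_mul,
    abs_of_pos (sub_pos.2 hs1)]
  refine mul_le_mul_of_nonneg_left ?_ (sub_pos.2 hs1).le
  simp only [genFun]
  rw [← (summable_sum_range_succ_mul_pow hs ha).tsum_sub (summable_sum_range_succ_mul_pow hs hb),
    ← Real.norm_eq_abs]
  refine tsum_of_norm_bounded hc.hasSum fun n => ?_
  rw [← sub_mul, Real.norm_eq_abs, abs_mul, abs_of_nonneg (pow_nonneg hs0 n)]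
  exact mul_le_mul_of_nonneg_right (habc n) (pow_nonneg hs0 n)

variable {X : Type*} {S : Set X} {p : X → ℕ → ℝ} {q : ℕ → ℝ}

theorem exists_abs_sum_sub_sum_le (hp : ∀ x ∈ S, ∀ n, 0 ≤ p x n) (hq : ∀ n, 0 ≤ q n)
    (hq0 : 0 < q 0)
    (hpq : Tendsto (fun i : ℕ × X => (∑ k ∈ range i.1, p i.2 k) / ∑ k ∈ range i.1, q k)
      (atTop ×ˢ 𝓟 S) (𝓝 1)) {ε : ℝ} (hε : 0 < ε) :
    ∃ D : ℕ → ℝ, Tendsto D atTop (𝓝 0) ∧ ∀ x ∈ S, ∀ n,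
      |∑ k ∈ range (n + 1), p x k - ∑ k ∈ range (n + 1), q k| ≤
        ε * ∑ k ∈ range (n + 1), q k + D n := by
  have hB : ∀ n, 0 < ∑ k ∈ range (n + 1), q k := fun n =>
    Finset.sum_pos' (fun k _ => hq k) ⟨0, by simp, hq0⟩
  have hsum_mono : ∀ {r : ℕ → ℝ}, (∀ n, 0 ≤ r n) → Monotone fun n => ∑ k ∈ range n, r k :=
    fun hr m n hmn => Finset.sum_le_sum_of_subset_of_nonneg (Finset.range_mono hmn)
      fun k _ _ => hr k
  have hunif : ∀ δ > 0, ∃ n₀ : ℕ, ∀ n ≥ n₀, ∀ x ∈ S,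
      |∑ k ∈ range (n + 1), p x k - ∑ k ∈ range (n + 1), q k| ≤
        δ * ∑ k ∈ range (n + 1), q k := by
    intro δ hδ
    obtain ⟨n₀, hn₀⟩ := eventually_atTop.1 <| eventually_prod_principal_iff.1 <|
      hpq.eventually (Metric.closedBall_mem_nhds 1 hδ)
    refine ⟨n₀, fun n hn x hx => ?_⟩
    have h : dist ((∑ k ∈ range (n + 1), p x k) / ∑ k ∈ range (n + 1), q k) 1 ≤ δ :=
      hn₀ (n + 1) (by lia) x hx
    rwa [Real.dist_eq, div_sub_one (hB n).ne', abs_div,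
      abs_of_pos (hB n), div_le_iff₀ (hB n)] at h
  obtain ⟨n₀, hn₀⟩ := hunif ε hε
  obtain ⟨n₁, hn₁⟩ := hunif 1 one_pos
  set C := 2 * ∑ k ∈ range (n₀ + n₁ + 1), q k
  refine ⟨fun n => if n < n₀ then C else 0, ?_, fun x hx n => ?_⟩
  · refine tendsto_const_nhds.congr' ?_
    filter_upwards [eventually_ge_atTop n₀] with n hn using (if_neg hn.not_gt).symm
  · rcases lt_or_ge n n₀ with hn | hn
    · have hpN := (abs_le.1 (hn₁ (n₀ + n₁) (by lia) x hx)).2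
      have hpn := hsum_mono (hp x hx) (show n + 1 ≤ n₀ + n₁ + 1 by lia)
      have hqn := hsum_mono hq (show n + 1 ≤ n₀ + n₁ + 1 by lia)
      have hp0 : 0 ≤ ∑ k ∈ range (n + 1), p x k := Finset.sum_nonneg fun k _ => hp x hx k
      have := mul_pos hε (hB n)
      simp only [if_pos hn, C] at hpn hqn ⊢
      rw [abs_le]
      constructor <;> linarith [hB n]
    · simpa [hn.not_gt] using hn₀ n hn x hx

theorem tendsto_genFun_div_genFun (hp : ∀ x ∈ S, ∀ n, 0 ≤ p x n) (hq : ∀ n, 0 ≤ q n)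
    (hq0 : 0 < q 0)
    (hp_sum : ∀ x ∈ S, ∀ s ∈ Set.Ioo (0 : ℝ) 1, Summable fun n => p x n * s ^ n)
    (hq_sum : ∀ s ∈ Set.Ioo (0 : ℝ) 1, Summable fun n => q n * s ^ n)
    (hpq : Tendsto (fun i : ℕ × X => (∑ k ∈ range i.1, p i.2 k) / ∑ k ∈ range i.1, q k)
      (atTop ×ˢ 𝓟 S) (𝓝 1)) :
    Tendsto (fun i : ℝ × X => genFun (p i.2) i.1 / genFun q i.1) (𝓝[<] 1 ×ˢ 𝓟 S) (𝓝 1) := by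
  rw [Metric.tendsto_nhds]
  intro ε hε
  obtain ⟨D, hD, hpqD⟩ := exists_abs_sum_sub_sum_le hp hq hq0 hpq (half_pos hε)
  rw [eventually_prod_principal_iff]
  filter_upwards [eventually_mem_Ioo_nhdsLT_one,
    (tendsto_one_sub_mul_genFun hD).eventually_lt_const (by positivity : 0 < ε / 2 * q 0)]
    with s hs hDs x hx
  have hs' := abs_lt_one_of_mem_Ioo hs
  have hq_s := hq_sum s hs
  have hD_s := summable_mul_pow_of_tendsto hD hs'
  have hq_le : q 0 ≤ genFun q s := apply_zero_le_genFun hq hs.1.le hq_s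
  have hqB := (summable_sum_range_succ_mul_pow hs' hq_s).mul_left (ε / 2)
  have hsplit : (1 - s) * genFun (fun n => ε / 2 * ∑ k ∈ range (n + 1), q k + D n) s =
      ε / 2 * genFun q s + (1 - s) * genFun D s := by
    rw [genFun_eq_one_sub_mul_genFun_sum_range_succ hs' hq_s]
    simp only [genFun, add_mul, mul_assoc]
    rw [Summable.tsum_add hqB hD_s, tsum_mul_left]
    ring
  have hdiff := abs_genFun_sub_genFun_le hs.1.le hs.2 (hp_sum x hx s hs) hq_s
    (by simpa only [add_mul, mul_assoc] using hqB.add hD_s) (hpqD x hx)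
  rw [hsplit] at hdiff
  have hq_pos : 0 < genFun q s := hq0.trans_le hq_le
  rw [Real.dist_eq, div_sub_one hq_pos.ne', abs_div, abs_of_pos hq_pos, div_lt_iff₀ hq_pos]
  calc |genFun (p x) s - genFun q s| ≤ ε / 2 * genFun q s + (1 - s) * genFun D s := hdiff
    _ < ε / 2 * genFun q s + ε / 2 * q 0 := by gcongr
    _ ≤ ε / 2 * genFun q s + ε / 2 * genFun q s := by gcongr
    _ = ε * genFun q s := by ring

end GeneratingFunctions

section LaplaceStep

open Set (Ioi Ici Ico)

variable {r : ℝ} {a : ℕ → ℝ}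

theorem integral_Ico_exp_neg_mul (hr : r ≠ 0) (n : ℕ) :
    ∫ t in Ico (n : ℝ) (n + 1), Real.exp (-(r * t)) =
      (1 - Real.exp (-r)) / r * Real.exp (-r) ^ n := by
  rw [integral_Ico_eq_integral_Ioc, ← intervalIntegral.integral_of_le (by linarith)]
  simp only [← neg_mul]
  rw [intervalIntegral.integral_comp_mul_left _ (neg_ne_zero.2 hr), integral_exp, smul_eq_mul,
    mul_add_one, Real.exp_add, mul_comm (-r) (n : ℝ), Real.exp_nat_mul]
  field_simp
  ring

theorem iUnion_Ico_natCast : ⋃ n : ℕ, Ico (n : ℝ) (n + 1) = Ici 0 := by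
  simpa using iUnion_Ico_map_succ_eq_Ici (f := fun n : ℕ => (n : ℝ)) (fun n => by simp)
    (not_bddAbove_of_tendsto_atTop tendsto_natCast_atTop_atTop)

theorem exp_neg_mul_mul_floor_eqOn (n : ℕ) :
    Set.EqOn (fun t => Real.exp (-(r * t)) * a ⌊t⌋₊) (fun t => Real.exp (-(r * t)) * a n)
      (Ico (n : ℝ) (n + 1)) :=
  fun t ht => by simp only [Nat.floor_eq_on_Ico n t ht]

theorem integrableOn_exp_neg_mul_mul_floor (hr : r ≠ 0)
    (ha : Summable fun n => a n * Real.exp (-r) ^ n) :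
    IntegrableOn (fun t => Real.exp (-(r * t)) * a ⌊t⌋₊) (Ioi 0) := by
  rw [← integrableOn_Ici_iff_integrableOn_Ioi, ← iUnion_Ico_natCast]
  refine integrableOn_iUnion_of_summable_integral_norm (fun n => ?_) ?_
  · refine IntegrableOn.congr_fun ?_ (exp_neg_mul_mul_floor_eqOn n).symm measurableSet_Ico
    exact (Continuous.integrableOn_Icc (by fun_prop)).mono_set Set.Ico_subset_Icc_self
  · refine (ha.abs.mul_left ((1 - Real.exp (-r)) / r)).congr fun n => ?_
    rw [setIntegral_congr_fun measurableSet_Ico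
      fun t ht => congrArg norm (exp_neg_mul_mul_floor_eqOn (r := r) (a := a) n ht)]
    simp only [norm_mul, Real.norm_eq_abs, Real.abs_exp, abs_mul, abs_pow]
    rw [integral_mul_const, integral_Ico_exp_neg_mul hr]
    ring

theorem integral_exp_neg_mul_mul_floor (hr : r ≠ 0)
    (ha : Summable fun n => a n * Real.exp (-r) ^ n) :
    ∫ t in Ioi 0, Real.exp (-(r * t)) * a ⌊t⌋₊ =
      (1 - Real.exp (-r)) / r * genFun a (Real.exp (-r)) := by
  have hint := integrableOn_exp_neg_mul_mul_floor hr ha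
  rw [← integrableOn_Ici_iff_integrableOn_Ioi, ← iUnion_Ico_natCast] at hint
  have hdisj : Pairwise (Function.onFun Disjoint fun n : ℕ => Ico (n : ℝ) (n + 1)) := by
    simpa using (Nat.mono_cast (α := ℝ)).pairwise_disjoint_on_Ico_succ
  have hsum := hasSum_integral_iUnion (fun n : ℕ => measurableSet_Ico) hdisj hint
  rw [iUnion_Ico_natCast, integral_Ici_eq_integral_Ioi] at hsum
  rw [← hsum.tsum_eq, genFun, ← tsum_mul_left]
  congr 1 with n
  rw [setIntegral_congr_fun measurableSet_Ico (exp_neg_mul_mul_floor_eqOn n), integral_mul_const,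
    integral_Ico_exp_neg_mul hr]
  ring

variable {c : ℝ}

theorem integrableOn_exp_neg_mul_mul_floor_mul (hc : c ≠ 0) {n : ℝ} (hn : 0 < n)
    (ha : Summable fun k => a k * Real.exp (-(c / n)) ^ k) :
    IntegrableOn (fun t => Real.exp (-(c * t)) * a ⌊t * n⌋₊) (Ioi 0) := by
  have h := (integrableOn_Ioi_comp_mul_right_iff _ 0 hn).2 <| (zero_mul n).symm ▸
    integrableOn_exp_neg_mul_mul_floor (div_ne_zero hc hn.ne') ha
  refine h.congr_fun (fun t _ => ?_) measurableSet_Ioi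
  simp only [show c / n * (t * n) = c * t by field_simp]

theorem integral_exp_neg_mul_mul_floor_mul (hc : c ≠ 0) {n : ℝ} (hn : 0 < n)
    (ha : Summable fun k => a k * Real.exp (-(c / n)) ^ k) :
    ∫ t in Ioi 0, Real.exp (-(c * t)) * a ⌊t * n⌋₊ =
      (1 - Real.exp (-(c / n))) / c * genFun a (Real.exp (-(c / n))) := by
  have h := integral_comp_mul_right_Ioi (fun t => Real.exp (-(c / n * t)) * a ⌊t⌋₊) 0 hn
  rw [zero_mul, integral_exp_neg_mul_mul_floor (div_ne_zero hc hn.ne') ha, smul_eq_mul] at h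
  simp only [show ∀ t, c / n * (t * n) = c * t from fun t => by field_simp] at h
  rw [h]
  field_simp

end LaplaceStep

section Moments

open scoped Topology

variable {Ω ι : Type*} [MeasurableSpace Ω] {μ : Measure Ω} {l : Filter ι}
  {Y G : Ω → ℝ} {g : ι → Ω → ℝ} {u v : ℝ} {h k : ℝ → ℝ}

theorem integrable_continuous_comp_mul (hY : AEStronglyMeasurable Y μ)
    (hYuv : ∀ᵐ ω ∂μ, Y ω ∈ Set.Icc u v) (hG : Integrable G μ) (hh : Continuous h) :
    Integrable (fun ω => h (Y ω) * G ω) μ := by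
  obtain ⟨C, hC⟩ := isCompact_Icc.exists_bound_of_continuousOn (hh.continuousOn (s := Set.Icc u v))
  exact hG.bdd_mul (hh.comp_aestronglyMeasurable hY) (hYuv.mono fun ω hω => hC _ hω)

theorem abs_integral_comp_mul_sub_le (hY : AEStronglyMeasurable Y μ)
    (hYuv : ∀ᵐ ω ∂μ, Y ω ∈ Set.Icc u v) (hG : Integrable G μ) (hh : Continuous h)
    (hk : Continuous k) {ε : ℝ} (hhk : ∀ y ∈ Set.Icc u v, |h y - k y| ≤ ε) :
    |∫ ω, h (Y ω) * G ω ∂μ - ∫ ω, k (Y ω) * G ω ∂μ| ≤ ε * ∫ ω, |G ω| ∂μ := by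
  rw [← integral_sub (integrable_continuous_comp_mul hY hYuv hG hh)
    (integrable_continuous_comp_mul hY hYuv hG hk), ← integral_const_mul, ← Real.norm_eq_abs]
  refine norm_integral_le_of_norm_le (hG.abs.const_mul ε) (hYuv.mono fun ω hω => ?_)
  rw [← sub_mul, norm_mul, Real.norm_eq_abs, Real.norm_eq_abs]
  exact mul_le_mul_of_nonneg_right (hhk _ hω) (abs_nonneg _)

theorem tendsto_integral_polynomial_comp_mul (hY : AEStronglyMeasurable Y μ)
    (hYuv : ∀ᵐ ω ∂μ, Y ω ∈ Set.Icc u v) (hg : ∀ᶠ i in l, Integrable (g i) μ)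
    (hG : Integrable G μ)
    (hmom : ∀ m : ℕ, Tendsto (fun i => ∫ ω, Y ω ^ m * g i ω ∂μ) l (𝓝 (∫ ω, Y ω ^ m * G ω ∂μ)))
    (p : Polynomial ℝ) :
    Tendsto (fun i => ∫ ω, p.eval (Y ω) * g i ω ∂μ) l (𝓝 (∫ ω, p.eval (Y ω) * G ω ∂μ)) := by
  induction p using Polynomial.induction_on' with
  | monomial m c =>
    simpa only [Polynomial.eval_monomial, mul_assoc, integral_const_mul] using
      (hmom m).const_mul c
  | add p q hp hq =>
    have hadd : ∀ {F : Ω → ℝ}, Integrable F μ → ∫ ω, (p + q).eval (Y ω) * F ω ∂μ =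
        ∫ ω, p.eval (Y ω) * F ω ∂μ + ∫ ω, q.eval (Y ω) * F ω ∂μ := fun hF => by
      simp only [Polynomial.eval_add, add_mul]
      exact integral_add (integrable_continuous_comp_mul hY hYuv hF p.continuous)
        (integrable_continuous_comp_mul hY hYuv hF q.continuous)
    rw [hadd hG]
    exact (hp.add hq).congr' (hg.mono fun i hi => (hadd hi).symm)

theorem tendsto_integral_continuous_comp_mul (hY : AEStronglyMeasurable Y μ)
    (hYuv : ∀ᵐ ω ∂μ, Y ω ∈ Set.Icc u v) (hg : ∀ᶠ i in l, Integrable (g i) μ)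
    (hg0 : ∀ᶠ i in l, 0 ≤ᵐ[μ] g i) (hG : Integrable G μ)
    (hmom : ∀ m : ℕ, Tendsto (fun i => ∫ ω, Y ω ^ m * g i ω ∂μ) l (𝓝 (∫ ω, Y ω ^ m * G ω ∂μ)))
    (hh : Continuous h) :
    Tendsto (fun i => ∫ ω, h (Y ω) * g i ω ∂μ) l (𝓝 (∫ ω, h (Y ω) * G ω ∂μ)) := by
  rw [Metric.tendsto_nhds]
  intro ε hε
  set M := ∫ ω, |G ω| ∂μ
  have hM : 0 ≤ M := integral_nonneg fun ω => abs_nonneg _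
  have hmass : Tendsto (fun i => ∫ ω, g i ω ∂μ) l (𝓝 (∫ ω, G ω ∂μ)) := by
    simpa only [pow_zero, one_mul] using hmom 0
  have hGM : ∫ ω, G ω ∂μ < M + 1 :=
    (integral_mono hG hG.abs fun ω => le_abs_self _).trans_lt (lt_add_one M)
  set δ := ε / (2 * (2 * M + 1))
  have hδ : 0 < δ := by positivity
  obtain ⟨p, hp⟩ := exists_polynomial_near_of_continuousOn u v h hh.continuousOn δ hδ
  have hhp : ∀ y ∈ Set.Icc u v, |h y - p.eval y| ≤ δ := fun y hy => by
    rw [abs_sub_comm]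
    exact (hp y hy).le
  filter_upwards [hg, hg0, hmass.eventually_lt_const hGM,
    Metric.tendsto_nhds.1 (tendsto_integral_polynomial_comp_mul hY hYuv hg hG hmom p) (ε / 2)
      (half_pos hε)] with i hi hi0 hiM hip
  have habs : ∫ ω, |g i ω| ∂μ = ∫ ω, g i ω ∂μ :=
    integral_congr_ae (hi0.mono fun ω hω => abs_of_nonneg hω)
  have hgp := abs_integral_comp_mul_sub_le hY hYuv hi hh p.continuous hhp
  have hGp := abs_integral_comp_mul_sub_le hY hYuv hG hh p.continuous hhp
  have hδM : δ * (M + 1) + δ * M = ε / 2 := by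
    simp only [δ]
    field_simp
    ring
  have hgM : δ * ∫ ω, |g i ω| ∂μ < δ * (M + 1) := by
    rw [habs]
    gcongr
  rw [Real.dist_eq, abs_lt] at hip ⊢
  rw [abs_le] at hgp hGp
  constructor <;> linarith

end Moments

section Tauberian

open scoped Topology
open Set (Ioi Ioo)

/-- A continuous weight on `(0, ∞)`, positive exactly on the window `(u, v)`, of the form
`e⁻ᵗ h(e⁻ᵗ)` with `h` continuous: in the variable `e⁻ᵗ` the method of moments applies to it. -/
noncomputable def windowWeight (u v t : ℝ) : ℝ :=
  Real.exp (-t) *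
    max 0 ((Real.exp (-t) - Real.exp (-v)) * (Real.exp (-u) - Real.exp (-t)))

theorem windowWeight_nonneg (u v t : ℝ) : 0 ≤ windowWeight u v t :=
  mul_nonneg (Real.exp_pos _).le (le_max_left _ _)

variable {u v t : ℝ}

theorem windowWeight_pos (ht : t ∈ Ioo u v) : 0 < windowWeight u v t := by
  have hu : Real.exp (-t) < Real.exp (-u) := Real.exp_lt_exp.2 (neg_lt_neg ht.1)
  have hv : Real.exp (-v) < Real.exp (-t) := Real.exp_lt_exp.2 (neg_lt_neg ht.2)
  exact mul_pos (Real.exp_pos _)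
    (lt_max_of_lt_right (mul_pos (sub_pos.2 hv) (sub_pos.2 hu)))

theorem windowWeight_eq_zero (huv : u ≤ v) (ht : t ∉ Ioo u v) : windowWeight u v t = 0 := by
  rw [windowWeight, max_eq_left, mul_zero]
  have huv' : Real.exp (-v) ≤ Real.exp (-u) := Real.exp_le_exp.2 (neg_le_neg huv)
  rcases not_and_or.1 ht with h | h
  · have h' : Real.exp (-u) ≤ Real.exp (-t) := Real.exp_le_exp.2 (neg_le_neg (not_lt.1 h))
    exact mul_nonpos_of_nonneg_of_nonpos (by linarith) (by linarith)
  · have h' : Real.exp (-t) ≤ Real.exp (-v) := Real.exp_le_exp.2 (neg_le_neg (not_lt.1 h))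
    exact mul_nonpos_of_nonpos_of_nonneg (by linarith) (by linarith)

theorem ae_exp_neg_mem_Icc : ∀ᵐ t ∂volume.restrict (Ioi (0 : ℝ)), Real.exp (-t) ∈ Set.Icc 0 1 :=
  (ae_restrict_mem measurableSet_Ioi).mono fun _ ht =>
    ⟨(Real.exp_pos _).le, Real.exp_le_one_iff.2 (neg_nonpos.2 (le_of_lt ht))⟩

variable {Φ Ψ : ℝ → ℝ}

theorem windowWeight_mul_eq (u v t y : ℝ) : windowWeight u v t * y =
    max 0 ((Real.exp (-t) - Real.exp (-v)) * (Real.exp (-u) - Real.exp (-t))) *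
      (Real.exp (-t) * y) := by
  rw [windowWeight]
  ring

theorem integrableOn_windowWeight_mul (hΦ : IntegrableOn (fun t => Real.exp (-t) * Φ t) (Ioi 0)) :
    IntegrableOn (fun t => windowWeight u v t * Φ t) (Ioi 0) := by
  simp only [windowWeight_mul_eq]
  exact integrable_continuous_comp_mul (Y := fun t => Real.exp (-t))
    (h := fun y => max 0 ((y - Real.exp (-v)) * (Real.exp (-u) - y)))
    (by fun_prop) ae_exp_neg_mem_Icc hΦ (by fun_prop)

theorem integrableOn_windowWeight : IntegrableOn (windowWeight u v) (Ioi 0) := by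
  simpa using integrableOn_windowWeight_mul (u := u) (v := v) (Φ := fun _ => 1)
    (by simpa using integrableOn_exp_neg_Ioi 0)

theorem integral_windowWeight_pos (hu : 0 ≤ u) (huv : u < v) :
    0 < ∫ t in Ioi 0, windowWeight u v t := by
  rw [setIntegral_pos_iff_support_of_nonneg_ae (Eventually.of_forall (windowWeight_nonneg u v))
    integrableOn_windowWeight]
  have hsub : Ioo u v ⊆ Function.support (windowWeight u v) ∩ Ioi 0 := fun t ht =>
    ⟨(windowWeight_pos ht).ne', hu.trans_lt ht.1⟩
  refine lt_of_lt_of_le ?_ (measure_mono hsub)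
  simpa using huv

theorem integral_windowWeight_mul_mono (huv : u ≤ v)
    (hΦ : IntegrableOn (fun t => windowWeight u v t * Φ t) (Ioi 0))
    (hΨ : IntegrableOn (fun t => windowWeight u v t * Ψ t) (Ioi 0))
    (hle : ∀ t ∈ Ioo u v, Φ t ≤ Ψ t) :
    ∫ t in Ioi 0, windowWeight u v t * Φ t ≤ ∫ t in Ioi 0, windowWeight u v t * Ψ t := by
  refine integral_mono hΦ hΨ fun t => ?_
  by_cases ht : t ∈ Ioo u v
  · exact mul_le_mul_of_nonneg_left (hle t ht) (windowWeight_nonneg u v t)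
  · simp only [windowWeight_eq_zero huv ht, zero_mul, le_refl]

theorem le_integral_windowWeight_mul {c : ℝ} (huv : u ≤ v)
    (hΦ : IntegrableOn (fun t => windowWeight u v t * Φ t) (Ioi 0))
    (hle : ∀ t ∈ Ioo u v, c ≤ Φ t) :
    (∫ t in Ioi 0, windowWeight u v t) * c ≤ ∫ t in Ioi 0, windowWeight u v t * Φ t := by
  rw [← integral_mul_const]
  exact integral_windowWeight_mul_mono huv (integrableOn_windowWeight.mul_const c) hΦ hle

theorem integral_windowWeight_mul_le {c : ℝ} (huv : u ≤ v)
    (hΦ : IntegrableOn (fun t => windowWeight u v t * Φ t) (Ioi 0))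
    (hle : ∀ t ∈ Ioo u v, Φ t ≤ c) :
    ∫ t in Ioi 0, windowWeight u v t * Φ t ≤ (∫ t in Ioi 0, windowWeight u v t) * c := by
  rw [← integral_mul_const]
  exact integral_windowWeight_mul_mono huv hΦ (integrableOn_windowWeight.mul_const c) hle

variable {ι : Type*} {l : Filter ι} {φ : ι → ℝ → ℝ}

theorem tendsto_integral_windowWeight_mul
    (hφ : ∀ᶠ i in l, IntegrableOn (fun t => Real.exp (-t) * φ i t) (Ioi 0))
    (hφ0 : ∀ᶠ i in l, ∀ t > 0, 0 ≤ φ i t)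
    (hΦ : IntegrableOn (fun t => Real.exp (-t) * Φ t) (Ioi 0))
    (hlap : ∀ c > 0, Tendsto (fun i => ∫ t in Ioi 0, Real.exp (-(c * t)) * φ i t) l
      (𝓝 (∫ t in Ioi 0, Real.exp (-(c * t)) * Φ t))) :
    Tendsto (fun i => ∫ t in Ioi 0, windowWeight u v t * φ i t) l
      (𝓝 (∫ t in Ioi 0, windowWeight u v t * Φ t)) := by
  simp only [windowWeight_mul_eq]
  have hpow : ∀ (m : ℕ) (t y : ℝ), Real.exp (-t) ^ m * (Real.exp (-t) * y) =
      Real.exp (-((m + 1) * t)) * y := fun m t y => by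
    rw [← mul_assoc, ← pow_succ, ← Real.exp_nat_mul]
    push_cast
    ring_nf
  refine tendsto_integral_continuous_comp_mul (Y := fun t => Real.exp (-t))
    (h := fun y => max 0 ((y - Real.exp (-v)) * (Real.exp (-u) - y)))
    (by fun_prop) ae_exp_neg_mem_Icc hφ ?_ hΦ (fun m => ?_) (by fun_prop)
  · filter_upwards [hφ0] with i hi
    filter_upwards [ae_restrict_mem measurableSet_Ioi] with t ht
    exact mul_nonneg (Real.exp_pos _).le (hi t ht)
  · simpa only [hpow] using hlap (m + 1) (by positivity)

theorem tendsto_apply_of_tendsto_laplace {a : ℝ} (ha : 0 < a)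
    (hφ_anti : ∀ᶠ i in l, AntitoneOn (φ i) (Ioi 0))
    (hφ : ∀ᶠ i in l, IntegrableOn (fun t => Real.exp (-t) * φ i t) (Ioi 0))
    (hφ0 : ∀ᶠ i in l, ∀ t > 0, 0 ≤ φ i t)
    (hΦ : IntegrableOn (fun t => Real.exp (-t) * Φ t) (Ioi 0)) (hΦa : ContinuousAt Φ a)
    (hlap : ∀ c > 0, Tendsto (fun i => ∫ t in Ioi 0, Real.exp (-(c * t)) * φ i t) l
      (𝓝 (∫ t in Ioi 0, Real.exp (-(c * t)) * Φ t))) :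
    Tendsto (fun i => φ i a) l (𝓝 (Φ a)) := by
  have hwindow := fun u v =>
    tendsto_integral_windowWeight_mul (u := u) (v := v) hφ hφ0 hΦ hlap
  refine tendsto_order.2 ⟨fun c hc => ?_, fun c hc => ?_⟩
  · obtain ⟨c', hcc', hc'⟩ := exists_between hc
    obtain ⟨v, hav, hv⟩ := mem_nhdsGT_iff_exists_Ioo_subset.1
      (nhdsWithin_le_nhds (hΦa.eventually_const_lt hc'))
    have hJ := integral_windowWeight_pos ha.le hav
    have hlow := le_integral_windowWeight_mul (le_of_lt hav) (integrableOn_windowWeight_mul hΦ)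
      fun t ht => (hv ht).le
    filter_upwards [hφ_anti, hφ, (hwindow a v).eventually_const_lt
      ((mul_lt_mul_of_pos_left hcc' hJ).trans_le hlow)] with i hi_anti hi hlt
    refine lt_of_mul_lt_mul_left (hlt.trans_le ?_) hJ.le
    exact integral_windowWeight_mul_le (le_of_lt hav) (integrableOn_windowWeight_mul hi)
      fun t ht => hi_anti ha (ha.trans ht.1) ht.1.le
  · obtain ⟨c', hc', hcc'⟩ := exists_between hc
    obtain ⟨u, ⟨hu, hua⟩, hsub⟩ := (mem_nhdsLT_iff_exists_mem_Ico_Ioo_subset ha).1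
      (nhdsWithin_le_nhds (hΦa.eventually_lt_const hc'))
    have hJ := integral_windowWeight_pos hu hua
    have hupp := integral_windowWeight_mul_le hua.le (integrableOn_windowWeight_mul hΦ)
      fun t ht => (hsub ht).le
    filter_upwards [hφ_anti, hφ, (hwindow u a).eventually_lt_const
      (hupp.trans_lt (mul_lt_mul_of_pos_left hcc' hJ))] with i hi_anti hi hlt
    refine lt_of_mul_lt_mul_left (lt_of_le_of_lt ?_ hlt) hJ.le
    exact le_integral_windowWeight_mul hua.le (integrableOn_windowWeight_mul hi)
      fun t ht => hi_anti (hu.trans_lt ht.1) ha ht.2.le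

end Tauberian

section RegularVariation

open scoped Topology

/-- The sequence `W` is regularly varying of exponent `ρ`. The ratio is tested at all real `t > 0`
through `⌊tn⌋`, which for sequences is the usual definition. -/
def IsRegularlyVarying (W : ℕ → ℝ) (ρ : ℝ) : Prop :=
  ∀ t : ℝ, 0 < t → Tendsto (fun n : ℕ => W ⌊t * n⌋₊ / W n) atTop (𝓝 (t ^ ρ))

variable {W : ℕ → ℝ} {ρ : ℝ}

theorem tendsto_apply_mul_div_apply_mul (hW0 : ∀ n, W n ≠ 0)
    (hW : ∀ p : ℕ, 0 < p → Tendsto (fun n => W (p * n) / W n) atTop (𝓝 ((p : ℝ) ^ ρ)))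
    {p q : ℕ} (hp : 0 < p) (hq : 0 < q) :
    Tendsto (fun n => W (p * n) / W (q * n)) atTop (𝓝 ((p / q : ℝ) ^ ρ)) := by
  rw [Real.div_rpow p.cast_nonneg q.cast_nonneg]
  have hq0 : (q : ℝ) ^ ρ ≠ 0 := (Real.rpow_pos_of_pos (Nat.cast_pos.2 hq) ρ).ne'
  refine ((hW p hp).div (hW q hq) hq0).congr fun n => ?_
  exact div_div_div_cancel_right₀ (hW0 n) _ _

theorem exists_nat_div_mem_Ioo {x y : ℝ} (hx : 0 ≤ x) (hxy : x < y) :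
    ∃ p q : ℕ, 0 < p ∧ 0 < q ∧ (p / q : ℝ) ∈ Set.Ioo x y := by
  obtain ⟨r, hxr, hry⟩ := exists_rat_btwn hxy
  have hr : 0 < r := by exact_mod_cast hx.trans_lt hxr
  refine ⟨r.num.toNat, r.den, by have := Rat.num_pos.2 hr; lia, r.den_pos, ?_⟩
  have hcast : ((r.num.toNat : ℕ) : ℝ) / r.den = r := by
    rw [← Int.cast_natCast, Int.toNat_of_nonneg (Rat.num_nonneg.2 hr.le)]
    exact_mod_cast r.num_div_den
  rw [hcast]
  exact ⟨hxr, hry⟩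

theorem mul_div_add_one_le_floor_mul {p q n : ℕ} {t : ℝ} (h : p ≤ (t - p / q) * n) :
    p * (n / q + 1) ≤ ⌊t * n⌋₊ := by
  refine Nat.le_floor ?_
  calc ((p * (n / q + 1) : ℕ) : ℝ) = p * (n / q : ℕ) + p := by push_cast; ring
    _ ≤ p * (n / q) + (t - p / q) * n := by gcongr; exact Nat.cast_div_le
    _ = t * n := by ring

theorem floor_mul_le_mul_div {p q n : ℕ} {t : ℝ} (h : p ≤ (p / q - t) * n) :
    ⌊t * n⌋₊ ≤ p * (n / q) := by
  refine Nat.floor_le_of_le ?_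
  have hdiv : (n / q : ℝ) ≤ (n / q : ℕ) + 1 := by
    rw [← Nat.floor_div_eq_div (K := ℝ)]
    exact (Nat.lt_floor_add_one _).le
  calc t * n = p * (n / q) - (p / q - t) * n := by ring
    _ ≤ p * ((n / q : ℕ) + 1) - p := by gcongr
    _ = (p * (n / q) : ℕ) := by push_cast; ring

theorem isRegularlyVarying_of_tendsto_mul (hmono : Monotone W) (hW0 : ∀ n, 0 < W n)
    (hW : ∀ p : ℕ, 0 < p → Tendsto (fun n => W (p * n) / W n) atTop (𝓝 ((p : ℝ) ^ ρ))) :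
    IsRegularlyVarying W ρ := by
  intro t ht
  have hrat := fun {p q : ℕ} (hp : 0 < p) (hq : 0 < q) =>
    tendsto_apply_mul_div_apply_mul (fun n => (hW0 n).ne') hW hp hq
  have hcont : ContinuousAt (fun x : ℝ => x ^ ρ) t :=
    Real.continuousAt_rpow_const t ρ (.inl ht.ne')
  refine tendsto_order.2 ⟨fun c hc => ?_, fun c hc => ?_⟩
  · obtain ⟨x, ⟨hx, hxt⟩, hsub⟩ := (mem_nhdsLT_iff_exists_mem_Ico_Ioo_subset ht).1
      (nhdsWithin_le_nhds (hcont.eventually_const_lt hc))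
    obtain ⟨p, q, hp, hq, hpq⟩ := exists_nat_div_mem_Ioo hx hxt
    have hindex : Tendsto (fun n => n / q + 1) atTop atTop :=
      (tendsto_add_atTop_nat 1).comp (Nat.tendsto_div_const_atTop hq.ne')
    have hlarge : ∀ᶠ n : ℕ in atTop, (p : ℝ) ≤ (t - p / q) * n :=
      (tendsto_natCast_atTop_atTop.const_mul_atTop (sub_pos.2 hpq.2)).eventually_ge_atTop _
    filter_upwards [hindex.eventually ((hrat hp hq).eventually_const_lt (hsub hpq)), hlarge]
      with n hn hn'
    exact hn.trans_le (div_le_div₀ (hW0 _).le (hmono (mul_div_add_one_le_floor_mul hn')) (hW0 n)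
      (hmono (Nat.lt_mul_div_succ n hq).le))
  · obtain ⟨y, hty, hsub⟩ := mem_nhdsGT_iff_exists_Ioo_subset.1
      (nhdsWithin_le_nhds (hcont.eventually_lt_const hc))
    obtain ⟨p, q, hp, hq, hpq⟩ := exists_nat_div_mem_Ioo ht.le hty
    have hindex : Tendsto (fun n => n / q) atTop atTop := Nat.tendsto_div_const_atTop hq.ne'
    have hlarge : ∀ᶠ n : ℕ in atTop, (p : ℝ) ≤ (p / q - t) * n :=
      (tendsto_natCast_atTop_atTop.const_mul_atTop (sub_pos.2 hpq.1)).eventually_ge_atTop _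
    filter_upwards [hindex.eventually ((hrat hp hq).eventually_lt_const (hsub hpq)), hlarge]
      with n hn hn'
    exact (div_le_div₀ (hW0 _).le (hmono (floor_mul_le_mul_div hn')) (hW0 _)
      (hmono (Nat.mul_div_le n q))).trans_lt hn

theorem isRegularlyVarying_of_eventually_eq_rpow_mul (hmono : Monotone W) (hW0 : ∀ n, 0 < W n)
    {L : ℝ → ℝ} (hL : ∀ c > 0, Tendsto (fun t => L (c * t) / L t) atTop (𝓝 1))
    (hWL : ∀ᶠ n : ℕ in atTop, W n = (n : ℝ) ^ ρ * L n) : IsRegularlyVarying W ρ := by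
  refine isRegularlyVarying_of_tendsto_mul hmono hW0 fun p hp => ?_
  have hp0 : (0 : ℝ) < p := Nat.cast_pos.2 hp
  have hlim := ((hL p hp0).comp tendsto_natCast_atTop_atTop).const_mul ((p : ℝ) ^ ρ)
  rw [mul_one] at hlim
  refine hlim.congr' ?_
  filter_upwards [hWL, (tendsto_id.const_mul_atTop' hp).eventually hWL, eventually_gt_atTop 0]
    with n hn hpn hn0
  have hnρ : (n : ℝ) ^ ρ ≠ 0 := (Real.rpow_pos_of_pos (Nat.cast_pos.2 hn0) ρ).ne'
  rw [id_eq, Nat.cast_mul, Real.mul_rpow hp0.le n.cast_nonneg] at hpn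
  rw [hpn, hn, Function.comp_apply]
  field_simp

theorem apply_floor_mul_div_le (hmono : Monotone W) (hW0 : ∀ n, 0 < W n) (hsub : Subadditive W)
    {t : ℝ} (ht : 0 ≤ t) (n : ℕ) : W ⌊t * n⌋₊ / W n ≤ t + 1 := by
  rw [div_le_iff₀ (hW0 n)]
  have hfloor : ⌊t * n⌋₊ ≤ ⌊t⌋₊ * n + n := by
    refine Nat.floor_le_of_le ?_
    push_cast
    rw [← add_one_mul]
    gcongr
    exact (Nat.lt_floor_add_one t).le
  calc W ⌊t * n⌋₊ ≤ W (⌊t⌋₊ * n + n) := hmono hfloor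
    _ ≤ ⌊t⌋₊ * W n + W n := hsub.apply_mul_add_le _ _ _
    _ ≤ t * W n + W n := by gcongr; exacts [(hW0 n).le, Nat.floor_le ht]
    _ = (t + 1) * W n := by ring

theorem integrableOn_exp_neg_mul_mul_add_one {c : ℝ} (hc : 0 < c) :
    IntegrableOn (fun t => Real.exp (-(c * t)) * (t + 1)) (Set.Ioi 0) := by
  have hexp := exp_neg_integrableOn_Ioi 0 hc
  have hmul := integrableOn_rpow_mul_exp_neg_mul_rpow (s := 1) (p := 1) (by simp) one_pos hc
  refine (hmul.add hexp).congr_fun (fun t _ => ?_) measurableSet_Ioi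
  simp only [Pi.add_apply, Real.rpow_one, neg_mul]
  ring

theorem IsRegularlyVarying.tendsto_laplace (hW : IsRegularlyVarying W ρ) (hρ : -1 < ρ)
    (hmono : Monotone W) (hW0 : ∀ n, 0 < W n) (hsub : Subadditive W) {c : ℝ} (hc : 0 < c) :
    Tendsto (fun n : ℕ => ∫ t in Set.Ioi 0, Real.exp (-(c * t)) * (W ⌊t * n⌋₊ / W n)) atTop
      (𝓝 ((1 / c) ^ (ρ + 1) * Real.Gamma (ρ + 1))) := by
  rw [← Real.integral_rpow_mul_exp_neg_mul_Ioi (by linarith) hc]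
  refine tendsto_integral_of_dominated_convergence _ (fun n => ?_)
    (integrableOn_exp_neg_mul_mul_add_one hc) (fun n => ?_) ?_
  · have hfloor : Measurable fun t : ℝ => W ⌊t * n⌋₊ :=
      measurable_from_nat.comp (Nat.measurable_floor.comp (measurable_id.mul_const _))
    have hexp : Measurable fun t : ℝ => Real.exp (-(c * t)) := by fun_prop
    exact (hexp.mul (hfloor.div_const _)).aestronglyMeasurable
  · filter_upwards [ae_restrict_mem measurableSet_Ioi] with t ht
    rw [Real.norm_of_nonneg (mul_nonneg (Real.exp_pos _).le (div_pos (hW0 _) (hW0 _)).le)]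
    gcongr
    exact apply_floor_mul_div_le hmono hW0 hsub (le_of_lt ht) n
  · filter_upwards [ae_restrict_mem measurableSet_Ioi] with t ht
    rw [add_sub_cancel_right, mul_comm (t ^ ρ)]
    exact (hW t ht).const_mul _

end RegularVariation

section RenewalTauberian

open scoped Topology
open Finset (range)
open Set (Ioi)

variable {w : ℕ → ℝ}

theorem monotone_sum_range_succ (hw0 : ∀ n, 0 ≤ w n) :
    Monotone fun n => ∑ k ∈ range (n + 1), w k :=
  fun _ _ hmn => Finset.sum_le_sum_of_subset_of_nonneg (Finset.range_mono (Nat.succ_le_succ hmn))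
    fun k _ _ => hw0 k

theorem sum_range_succ_pos (hw0 : ∀ n, 0 ≤ w n) (hw : 0 < w 0) (n : ℕ) :
    0 < ∑ k ∈ range (n + 1), w k :=
  Finset.sum_pos' (fun k _ => hw0 k) ⟨0, Finset.mem_range.2 n.succ_pos, hw⟩

theorem subadditive_sum_range_succ (hw_anti : Antitone w) (hw0 : ∀ n, 0 ≤ w n) :
    Subadditive fun n => ∑ k ∈ range (n + 1), w k := by
  intro m n
  beta_reduce
  rw [add_right_comm, Finset.sum_range_add]
  gcongr _ + ?_
  calc ∑ k ∈ range n, w (m + 1 + k) ≤ ∑ k ∈ range n, w k := by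
        gcongr with k
        exact hw_anti (by lia)
    _ ≤ ∑ k ∈ range (n + 1), w k := by
        rw [Finset.sum_range_succ]
        linarith [hw0 n]

theorem exp_neg_div_mem_Ioo {c : ℝ} (hc : 0 < c) {n : ℕ} (hn : 0 < n) :
    Real.exp (-(c / n)) ∈ Set.Ioo (0 : ℝ) 1 :=
  ⟨Real.exp_pos _, Real.exp_lt_one_iff.2 (neg_neg_of_pos (div_pos hc (Nat.cast_pos.2 hn)))⟩

theorem tendsto_exp_neg_div_nhdsLT_one {c : ℝ} (hc : 0 < c) :
    Tendsto (fun n : ℕ => Real.exp (-(c / n))) atTop (𝓝[<] 1) := by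
  refine tendsto_nhdsWithin_iff.2 ⟨?_, ?_⟩
  · have hdiv : Tendsto (fun n : ℕ => -(c / n)) atTop (𝓝 0) := by
      simpa using (tendsto_const_div_atTop_nhds_zero_nat c).neg
    simpa [Function.comp_def] using (Real.continuous_exp.tendsto 0).comp hdiv
  · filter_upwards [eventually_gt_atTop 0] with n hn using (exp_neg_div_mem_Ioo hc hn).2

theorem tendsto_genFun_exp_neg_div_div (hw_anti : Antitone w) (hw0 : ∀ n, 0 ≤ w n) (hw : 0 < w 0)
    {ρ : ℝ} (hρ : -1 < ρ) (hW : IsRegularlyVarying (fun n => ∑ k ∈ range (n + 1), w k) ρ)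
    {c : ℝ} (hc : 0 < c) :
    Tendsto (fun n : ℕ => genFun w (Real.exp (-(c / n))) / ∑ k ∈ range (n + 1), w k) atTop
      (𝓝 ((1 / c) ^ ρ * Real.Gamma (ρ + 1))) := by
  have hlap := (hW.tendsto_laplace hρ (monotone_sum_range_succ hw0) (sum_range_succ_pos hw0 hw)
    (subadditive_sum_range_succ hw_anti hw0) hc).const_mul c
  have hlim : c * ((1 / c) ^ (ρ + 1) * Real.Gamma (ρ + 1)) =
      (1 / c) ^ ρ * Real.Gamma (ρ + 1) := by
    rw [Real.rpow_add_one (one_div_pos.2 hc).ne']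
    field_simp
  rw [hlim] at hlap
  refine hlap.congr' ?_
  filter_upwards [eventually_gt_atTop 0] with n hn
  have hs : |Real.exp (-(c / n))| < 1 := by
    rw [Real.abs_exp]
    exact (exp_neg_div_mem_Ioo hc hn).2
  have hsum := summable_mul_pow_of_antitone_of_nonneg hw_anti hw0 hs
  simp only [← mul_div_assoc]
  rw [integral_div, integral_exp_neg_mul_mul_floor_mul hc.ne' (Nat.cast_pos.2 hn)
    (summable_sum_range_succ_mul_pow hs hsum), genFun_eq_one_sub_mul_genFun_sum_range_succ hs hsum]
  field_simp

theorem integral_exp_neg_mul_rpow_div_Gamma_mul_Gamma {α c : ℝ} (hα : 0 < α) (hc : 0 < c) :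
    ∫ t in Ioi 0, Real.exp (-(c * t)) * (t ^ (α - 1) / (Real.Gamma α * Real.Gamma (2 - α))) =
      1 / ((1 / c) ^ (1 - α) * Real.Gamma (1 - α + 1)) / c := by
  have hcα : (1 / c) ^ α ≠ 0 := by positivity
  have hΓ := (Real.Gamma_pos_of_pos hα).ne'
  simp only [← mul_div_assoc, integral_div]
  simp only [mul_comm (Real.exp _)]
  rw [Real.integral_rpow_mul_exp_neg_mul_Ioi hα hc, Real.rpow_sub (one_div_pos.2 hc),
    Real.rpow_one, show 1 - α + 1 = 2 - α by ring]
  field_simp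

variable {X : Type*} {S : Set X} {u : X → ℕ → ℝ} {α : ℝ}

theorem tendsto_laplace_sum_mul (hw_anti : Antitone w) (hw0 : ∀ n, 0 ≤ w n) (hw : 0 < w 0)
    (hα0 : 0 < α) (hα2 : α < 2)
    (hW : IsRegularlyVarying (fun n => ∑ k ∈ range (n + 1), w k) (1 - α))
    (hu_anti : ∀ x ∈ S, Antitone (u x)) (hu0 : ∀ x ∈ S, ∀ n, 0 ≤ u x n)
    (hwu : Tendsto (fun i : ℝ × X => (1 - i.1) * genFun w i.1 * genFun (u i.2) i.1)
      (𝓝[<] 1 ×ˢ 𝓟 S) (𝓝 1)) {c : ℝ} (hc : 0 < c) :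
    Tendsto (fun i : ℕ × X => ∫ t in Ioi 0, Real.exp (-(c * t)) *
        ((∑ k ∈ range (i.1 + 1), w k) * u i.2 ⌊t * i.1⌋₊)) (atTop ×ˢ 𝓟 S)
      (𝓝 (∫ t in Ioi 0, Real.exp (-(c * t)) *
        (t ^ (α - 1) / (Real.Gamma α * Real.Gamma (2 - α))))) := by
  have hwW := (tendsto_genFun_exp_neg_div_div hw_anti hw0 hw (by linarith) hW hc).comp
    (tendsto_fst (f := atTop) (g := 𝓟 S))
  have hprod := hwu.comp ((tendsto_exp_neg_div_nhdsLT_one hc).prodMap tendsto_id)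
  have hΓ : Real.Gamma (1 - α + 1) ≠ 0 := (Real.Gamma_pos_of_pos (by linarith)).ne'
  have hlim := (hprod.div hwW (mul_ne_zero (by positivity) hΓ)).div_const c
  rw [integral_exp_neg_mul_rpow_div_Gamma_mul_Gamma hα0 hc]
  refine hlim.congr' ?_
  rw [EventuallyEq, eventually_prod_principal_iff]
  filter_upwards [eventually_gt_atTop 0] with n hn x hx
  have hs := exp_neg_div_mem_Ioo hc hn
  have hs' : |Real.exp (-(c / n))| < 1 := by rw [Real.abs_exp]; exact hs.2
  have hŵ : genFun w (Real.exp (-(c / n))) ≠ 0 := (hw.trans_le (apply_zero_le_genFun hw0 hs.1.le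
    (summable_mul_pow_of_antitone_of_nonneg hw_anti hw0 hs'))).ne'
  simp only [Function.comp_apply, Prod.map, id, mul_left_comm (Real.exp _), integral_const_mul,
    Pi.div_apply]
  rw [integral_exp_neg_mul_mul_floor_mul hc.ne' (Nat.cast_pos.2 hn)
    (summable_mul_pow_of_antitone_of_nonneg (hu_anti x hx) (hu0 x hx) hs')]
  have hW0 := (sum_range_succ_pos hw0 hw n).ne'
  field_simp

theorem tendsto_sum_mul_apply_of_tendsto_genFun (hw_anti : Antitone w) (hw0 : ∀ n, 0 ≤ w n)
    (hw : 0 < w 0) (hα0 : 0 < α) (hα2 : α < 2)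
    (hW : IsRegularlyVarying (fun n => ∑ k ∈ range (n + 1), w k) (1 - α))
    (hu_anti : ∀ x ∈ S, Antitone (u x)) (hu0 : ∀ x ∈ S, ∀ n, 0 ≤ u x n)
    (hwu : Tendsto (fun i : ℝ × X => (1 - i.1) * genFun w i.1 * genFun (u i.2) i.1)
      (𝓝[<] 1 ×ˢ 𝓟 S) (𝓝 1)) :
    Tendsto (fun i : ℕ × X => (∑ k ∈ range (i.1 + 1), w k) * u i.2 i.1) (atTop ×ˢ 𝓟 S)
      (𝓝 (1 / (Real.Gamma α * Real.Gamma (2 - α)))) := by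
  have h := tendsto_apply_of_tendsto_laplace (l := atTop ×ˢ 𝓟 S)
    (φ := fun i : ℕ × X => fun t => (∑ k ∈ range (i.1 + 1), w k) * u i.2 ⌊t * i.1⌋₊)
    (Φ := fun t => t ^ (α - 1) / (Real.Gamma α * Real.Gamma (2 - α))) one_pos ?_ ?_ ?_ ?_ ?_
    fun c hc => tendsto_laplace_sum_mul hw_anti hw0 hw hα0 hα2 hW hu_anti hu0 hwu hc
  · simpa only [one_mul, Nat.floor_natCast, Real.one_rpow] using h
  · refine eventually_prod_principal_iff.2 (.of_forall fun n x hx t _ t' _ htt' => ?_)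
    refine mul_le_mul_of_nonneg_left (hu_anti x hx (Nat.floor_le_floor ?_))
      (sum_range_succ_pos hw0 hw n).le
    gcongr
  · rw [eventually_prod_principal_iff]
    filter_upwards [eventually_gt_atTop 0] with n hn x hx
    have hint := integrableOn_exp_neg_mul_mul_floor_mul one_ne_zero (Nat.cast_pos.2 hn)
      (summable_mul_pow_of_antitone_of_nonneg (hu_anti x hx) (hu0 x hx)
        (by rw [Real.abs_exp]; exact (exp_neg_div_mem_Ioo one_pos hn).2))
    simp only [one_mul, mul_left_comm (Real.exp _)] at hint ⊢
    exact hint.const_mul _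
  · exact eventually_prod_principal_iff.2 (.of_forall fun n x hx t _ =>
      mul_nonneg (sum_range_succ_pos hw0 hw n).le (hu0 x hx _))
  · simp only [← mul_div_assoc]
    exact (Real.GammaIntegral_convergent hα0).div_const _
  · exact (Real.continuousAt_rpow_const 1 _ (.inl one_ne_zero)).div_const _

end RenewalTauberian

section Averages

open scoped Topology

variable {X : Type*} [MeasurableSpace X] {ν : Measure X}

theorem integrable_tsum_of_summable_integral_norm {ι : Type*} [Countable ι] {F : ι → X → ℝ}
    (hF : ∀ i, Integrable (F i) ν) (hF_sum : Summable fun i => ∫ x, ‖F i x‖ ∂ν) :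
    Integrable (fun x => ∑' i, F i x) ν := by
  refine ⟨(AEMeasurable.tsum fun i => (hF i).aemeasurable).aestronglyMeasurable, ?_⟩
  calc ∫⁻ x, ‖∑' i, F i x‖ₑ ∂ν ≤ ∫⁻ x, ∑' i, ‖F i x‖ₑ ∂ν :=
        lintegral_mono fun x => enorm_tsum_le_tsum_enorm
    _ = ∑' i, ENNReal.ofReal (∫ x, ‖F i x‖ ∂ν) := by
        simp only [lintegral_tsum fun i => (hF i).aestronglyMeasurable.enorm,
          ofReal_integral_norm_eq_lintegral_enorm (hF _)]
    _ < ⊤ := hF_sum.tsum_ofReal_lt_top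

variable {g : ℕ → X → ℝ} {C s : ℝ}

theorem summable_integral_norm_mul_pow (hgC : ∀ n, ∫ x, ‖g n x‖ ∂ν ≤ C) (hs : |s| < 1) :
    Summable fun n => ∫ x, ‖g n x * s ^ n‖ ∂ν := by
  have hsum := summable_mul_pow_of_abs_le (s := |s|)
    (fun n => (abs_of_nonneg (integral_nonneg fun x => norm_nonneg (g n x))).trans_le (hgC n))
    ((abs_abs s).trans_lt hs)
  simpa only [norm_mul, norm_pow, integral_mul_const, Real.norm_eq_abs] using hsum

theorem integrable_genFun (hg : ∀ n, Integrable (g n) ν) (hgC : ∀ n, ∫ x, ‖g n x‖ ∂ν ≤ C)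
    (hs : |s| < 1) : Integrable (fun x => genFun (fun n => g n x) s) ν :=
  integrable_tsum_of_summable_integral_norm (fun n => (hg n).mul_const _)
    (summable_integral_norm_mul_pow hgC hs)

theorem integral_genFun (hg : ∀ n, Integrable (g n) ν) (hgC : ∀ n, ∫ x, ‖g n x‖ ∂ν ≤ C)
    (hs : |s| < 1) :
    ∫ x, genFun (fun n => g n x) s ∂ν = genFun (fun n => ∫ x, g n x ∂ν) s := by
  simp only [genFun, ← integral_mul_const]
  exact (hasSum_integral_of_summable_integral_norm (fun n => (hg n).mul_const _)
    (summable_integral_norm_mul_pow hgC hs)).tsum_eq.symm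

theorem genFun_sum_antidiagonal_mul {a b : ℕ → ℝ} (ha : Summable fun n => a n * s ^ n)
    (hb : Summable fun n => b n * s ^ n) :
    genFun (fun n => ∑ p ∈ Finset.HasAntidiagonal.antidiagonal n, a p.1 * b p.2) s =
      genFun a s * genFun b s := by
  simp only [genFun]
  rw [tsum_mul_tsum_eq_tsum_sum_antidiagonal_of_summable_norm ha.norm hb.norm]
  refine tsum_congr fun n => ?_
  rw [Finset.sum_mul]
  refine Finset.sum_congr rfl fun p hp => ?_
  rw [← Finset.HasAntidiagonal.mem_antidiagonal.1 hp, pow_add]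
  ring

theorem tendsto_integral_mul_div_integral {ι : Type*} {l : Filter ι} {S : Set X} {q F : ι → X → ℝ}
    (hS : ∀ᵐ x ∂ν, x ∈ S) (hq : ∀ᶠ i in l, Integrable (q i) ν)
    (hqF : ∀ᶠ i in l, Integrable (fun x => q i x * F i x) ν) (hq0 : ∀ᶠ i in l, 0 ≤ᵐ[ν] q i)
    (hq_pos : ∀ᶠ i in l, 0 < ∫ x, q i x ∂ν)
    (hF : Tendsto (fun i : ι × X => F i.1 i.2) (l ×ˢ 𝓟 S) (𝓝 1)) :
    Tendsto (fun i => (∫ x, q i x * F i x ∂ν) / ∫ x, q i x ∂ν) l (𝓝 1) := by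
  rw [Metric.tendsto_nhds]
  intro ε hε
  have hFε := eventually_prod_principal_iff.1 (Metric.tendsto_nhds.1 hF (ε / 2) (half_pos hε))
  filter_upwards [hq, hqF, hq0, hq_pos, hFε] with i hqi hqFi hqi0 hqi_pos hFi
  rw [Real.dist_eq, div_sub_one hqi_pos.ne', abs_div, abs_of_pos hqi_pos, div_lt_iff₀ hqi_pos,
    ← integral_sub hqFi hqi, ← Real.norm_eq_abs]
  refine (norm_integral_le_of_norm_le (hqi.mul_const (ε / 2)) ?_).trans_lt ?_
  · filter_upwards [hS, hqi0] with x hx hqx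
    have hFx := hFi x hx
    rw [Real.dist_eq] at hFx
    rw [← mul_sub_one, Real.norm_eq_abs, abs_mul, abs_of_nonneg hqx]
    gcongr
  · rw [integral_mul_const]
    nlinarith

end Averages

section TransferOperator

variable {X : Type*} [MeasurableSpace X] {μ : Measure X} {T : X → X} {That : (X → ℝ) → X → ℝ}
  {f g : X → ℝ}

/-- `That` is a version of the transfer operator of `T` with respect to `μ`, acting on integrable
functions rather than on their classes. Integrability of `That g` is not part of the definition;
as the Bochner integral of a non-integrable function is `0`, it follows when `∫ g ≠ 0`. -/
def IsTransferOperator (μ : Measure X) (T : X → X) (That : (X → ℝ) → X → ℝ) : Prop :=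
  ∀ g : X → ℝ, Integrable g μ → ∀ B : Set X, MeasurableSet B →
    ∫ x in B, That g x ∂μ = ∫ x in T ⁻¹' B, g x ∂μ

namespace IsTransferOperator

theorem integral_apply (h : IsTransferOperator μ T That) (hg : Integrable g μ) :
    ∫ x, That g x ∂μ = ∫ x, g x ∂μ := by
  simpa using h g hg Set.univ .univ

theorem integrable_apply (h : IsTransferOperator μ T That) (hg : Integrable g μ)
    (hg0 : ∫ x, g x ∂μ ≠ 0) : Integrable (That g) μ :=
  not_imp_comm.1 integral_undef (by rwa [h.integral_apply hg])

theorem integrable_iterate_and_integral_iterate (h : IsTransferOperator μ T That)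
    (hf : Integrable f μ) (hf0 : ∫ x, f x ∂μ ≠ 0) (k : ℕ) :
    Integrable (That^[k] f) μ ∧ ∫ x, That^[k] f x ∂μ = ∫ x, f x ∂μ := by
  induction k with
  | zero => exact ⟨hf, rfl⟩
  | succ k ih =>
    rw [Function.iterate_succ_apply']
    exact ⟨h.integrable_apply ih.1 (ih.2 ▸ hf0), (h.integral_apply ih.1).trans ih.2⟩

theorem integrable_iterate (h : IsTransferOperator μ T That) (hf : Integrable f μ)
    (hf0 : ∫ x, f x ∂μ ≠ 0) (k : ℕ) : Integrable (That^[k] f) μ :=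
  (h.integrable_iterate_and_integral_iterate hf hf0 k).1

theorem setIntegral_iterate_succ (h : IsTransferOperator μ T That) (hf : Integrable f μ)
    (hf0 : ∫ x, f x ∂μ ≠ 0) (k : ℕ) {B : Set X} (hB : MeasurableSet B) :
    ∫ x in B, That^[k + 1] f x ∂μ = ∫ x in T ⁻¹' B, That^[k] f x ∂μ := by
  rw [Function.iterate_succ_apply']
  exact h _ (h.integrable_iterate hf hf0 k) B hB

theorem ae_nonneg_iterate (h : IsTransferOperator μ T That) (hf : Integrable f μ)
    (hf0 : ∫ x, f x ∂μ ≠ 0) (hf_nonneg : 0 ≤ᵐ[μ] f) (k : ℕ) : 0 ≤ᵐ[μ] That^[k] f := by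
  induction k with
  | zero => exact hf_nonneg
  | succ k ih =>
    refine ae_nonneg_of_forall_setIntegral_nonneg (h.integrable_iterate hf hf0 _) fun B hB _ => ?_
    rw [h.setIntegral_iterate_succ hf hf0 k hB]
    exact integral_nonneg_of_ae (ae_restrict_of_ae ih)

end IsTransferOperator

end TransferOperator

section Wandering

open scoped Topology
open Finset (range)

variable {X : Type*} {T : X → X} {A : Set X}

/-- The set of points that visit `A` at one of the times `0, …, n - 1`. -/
def hittingSet (T : X → X) (A : Set X) (n : ℕ) : Set X := ⋃ k ∈ range n, T^[k] ⁻¹' A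

/-- The set of points of `A` whose first return to `A` happens after time `n`. -/
def noReturnSet (T : X → X) (A : Set X) (n : ℕ) : Set X := A \ T ⁻¹' hittingSet T A n

theorem mem_hittingSet {n : ℕ} {x : X} : x ∈ hittingSet T A n ↔ ∃ k < n, T^[k] x ∈ A := by
  simp [hittingSet]

theorem monotone_hittingSet : Monotone (hittingSet T A) := fun _ _ hmn =>
  Set.biUnion_subset_biUnion_left (Finset.range_mono hmn)

theorem antitone_noReturnSet : Antitone (noReturnSet T A) := fun _ _ hmn =>
  Set.sdiff_subset_sdiff_right (Set.preimage_mono (monotone_hittingSet hmn))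

theorem noReturnSet_subset (n : ℕ) : noReturnSet T A n ⊆ A := Set.sdiff_subset

theorem hittingSet_zero : hittingSet T A 0 = ∅ := by simp [hittingSet]

theorem noReturnSet_zero : noReturnSet T A 0 = A := by simp [noReturnSet, hittingSet_zero]

theorem hittingSet_succ (n : ℕ) :
    hittingSet T A (n + 1) = noReturnSet T A n ∪ T ⁻¹' hittingSet T A n := by
  rw [noReturnSet, Set.sdiff_union_self]
  ext x
  simp only [Set.mem_union, Set.mem_preimage, mem_hittingSet, Nat.exists_lt_succ_left,
    Function.iterate_succ_apply, Function.iterate_zero, id]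

theorem disjoint_noReturnSet_preimage_hittingSet (n : ℕ) :
    Disjoint (noReturnSet T A n) (T ⁻¹' hittingSet T A n) := Set.disjoint_sdiff_left

variable [MeasurableSpace X] {μ : Measure X}

theorem measurableSet_hittingSet (hT : Measurable T) (hA : MeasurableSet A) (n : ℕ) :
    MeasurableSet (hittingSet T A n) :=
  Finset.measurableSet_biUnion _ fun k _ => hT.iterate k hA

theorem measurableSet_noReturnSet (hT : Measurable T) (hA : MeasurableSet A) (n : ℕ) :
    MeasurableSet (noReturnSet T A n) := hA.diff (hT (measurableSet_hittingSet hT hA n))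

theorem measure_hittingSet_lt_top (hT : MeasurePreserving T μ μ) (hA : MeasurableSet A)
    (hA_fin : μ A < ⊤) (n : ℕ) : μ (hittingSet T A n) < ⊤ :=
  measure_biUnion_lt_top (range n).finite_toSet fun k _ => by
    rwa [(hT.iterate k).measure_preimage hA.nullMeasurableSet]

/-- The wandering rate of `A`: the mass of the points that visit `A` at one of the times
`0, …, n`, hence the shift from `n` to `n + 1`. -/
noncomputable def wanderingRate (μ : Measure X) (T : X → X) (A : Set X) (n : ℕ) : ℝ :=
  μ.real (hittingSet T A (n + 1))

theorem monotone_wanderingRate (hT : MeasurePreserving T μ μ) (hA : MeasurableSet A)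
    (hA_fin : μ A < ⊤) : Monotone (wanderingRate μ T A) := fun _ _ hmn =>
  measureReal_mono (monotone_hittingSet (Nat.succ_le_succ hmn))
    (measure_hittingSet_lt_top hT hA hA_fin _).ne

theorem wanderingRate_pos (hT : MeasurePreserving T μ μ) (hA : MeasurableSet A) (hA0 : 0 < μ A)
    (hA_fin : μ A < ⊤) (n : ℕ) : 0 < wanderingRate μ T A n :=
  ENNReal.toReal_pos
    (hA0.trans_le (measure_mono fun _ hx => mem_hittingSet.2 ⟨0, n.succ_pos, hx⟩)).ne'
    (measure_hittingSet_lt_top hT hA hA_fin _).ne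

theorem antitone_measureReal_noReturnSet (hA_fin : μ A < ⊤) :
    Antitone fun n => μ.real (noReturnSet T A n) := fun _ _ hmn =>
  measureReal_mono (antitone_noReturnSet hmn) (measure_lt_top_mono (noReturnSet_subset _) hA_fin).ne

theorem measureReal_noReturnSet_zero_pos (hA0 : 0 < μ A) (hA_fin : μ A < ⊤) :
    0 < μ.real (noReturnSet T A 0) := by
  rw [noReturnSet_zero]
  exact ENNReal.toReal_pos hA0.ne' hA_fin.ne

theorem measureReal_hittingSet (hT : MeasurePreserving T μ μ) (hA : MeasurableSet A)
    (hA_fin : μ A < ⊤) (n : ℕ) :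
    μ.real (hittingSet T A n) = ∑ j ∈ range n, μ.real (noReturnSet T A j) := by
  induction n with
  | zero => simp [hittingSet_zero]
  | succ n ih =>
    have hH := measurableSet_hittingSet hT.measurable hA n
    have hpre := hT.measure_preimage hH.nullMeasurableSet
    rw [Finset.sum_range_succ, ← ih, hittingSet_succ,
      measureReal_union (disjoint_noReturnSet_preimage_hittingSet n) (hT.measurable hH)
        (measure_lt_top_mono (noReturnSet_subset n) hA_fin).ne
        (hpre ▸ measure_hittingSet_lt_top hT hA hA_fin n).ne,
      measureReal_def μ (T ⁻¹' _), hpre, add_comm, measureReal_def μ (hittingSet T A n)]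

theorem wanderingRate_eq_sum (hT : MeasurePreserving T μ μ) (hA : MeasurableSet A)
    (hA_fin : μ A < ⊤) :
    wanderingRate μ T A = fun n => ∑ j ∈ range (n + 1), μ.real (noReturnSet T A j) :=
  funext fun n => measureReal_hittingSet hT hA hA_fin (n + 1)

theorem ae_exists_iterate_mem (hcons : Conservative T μ) (herg : Ergodic T μ)
    (hA : MeasurableSet A) (hA0 : μ A ≠ 0) : ∀ᵐ x ∂μ, ∃ n, T^[n] x ∈ A := by
  let F := limsup (fun n => T^[n] ⁻¹' A) atTop
  have mem_F : ∀ x, x ∈ F ↔ ∃ᶠ n in atTop, T^[n] x ∈ A := fun x => mem_limsup_iff_frequently_mem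
  have hF_meas : MeasurableSet F :=
    .measurableSet_limsup fun n => herg.measurable.iterate n hA
  have hF_inv : T ⁻¹' F = F := by
    ext x
    simp only [Set.mem_preimage, mem_F, ← Function.iterate_succ_apply]
    conv_rhs => rw [← map_add_atTop_eq_nat 1, frequently_map]
  rcases herg.toPreErgodic.ae_mem_or_ae_notMem hF_meas hF_inv with hF | hF
  · exact hF.mono fun x hx => ((mem_F x).1 hx).exists
  · refine absurd (measure_eq_zero_iff_ae_notMem.2 ?_) hA0
    filter_upwards [hF, hcons.ae_mem_imp_frequently_image_mem hA.nullMeasurableSet] with x hx hrec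
    exact mt hrec (mt (mem_F x).2 hx)

theorem tendsto_setIntegral_hittingSet {f : X → ℝ} (hT : Measurable T) (hA : MeasurableSet A)
    (hsweep : ∀ᵐ x ∂μ, ∃ n, T^[n] x ∈ A) (hf : Integrable f μ) :
    Tendsto (fun n => ∫ x in hittingSet T A n, f x ∂μ) atTop (𝓝 (∫ x, f x ∂μ)) := by
  have hlim := tendsto_setIntegral_of_monotone (fun n => measurableSet_hittingSet hT hA n)
    monotone_hittingSet (hf.integrableOn (s := ⋃ n, hittingSet T A n))
  rwa [setIntegral_congr_set (t := Set.univ), setIntegral_univ] at hlim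
  refine eventuallyEq_univ.2 (hsweep.mono fun x ⟨n, hn⟩ => ?_)
  exact Set.mem_iUnion.2 ⟨n + 1, mem_hittingSet.2 ⟨n, n.lt_succ_self, hn⟩⟩

variable {That : (X → ℝ) → X → ℝ} {f : X → ℝ}

theorem IsTransferOperator.setIntegral_hittingSet_succ (h : IsTransferOperator μ T That)
    (hT : Measurable T) (hA : MeasurableSet A) (hf : Integrable f μ) (hf0 : ∫ x, f x ∂μ ≠ 0)
    (n i : ℕ) : ∫ x in hittingSet T A (n + 1), That^[i] f x ∂μ =
      ∑ p ∈ Finset.HasAntidiagonal.antidiagonal n,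
        ∫ x in noReturnSet T A p.1, That^[p.2 + i] f x ∂μ := by
  induction n generalizing i with
  | zero => simp [hittingSet_succ, hittingSet_zero]
  | succ n ih =>
    have hH := measurableSet_hittingSet hT hA (n + 1)
    have hint := h.integrable_iterate hf hf0 i
    rw [Finset.Nat.sum_antidiagonal_succ', hittingSet_succ (n + 1),
      setIntegral_union (disjoint_noReturnSet_preimage_hittingSet _) (hT hH) hint.integrableOn
        hint.integrableOn, ← h.setIntegral_iterate_succ hf hf0 i hH, ih (i + 1)]
    simp only [zero_add, add_right_comm _ 1 i, add_assoc]

end Wandering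

section Renewal

open scoped Topology
open Finset (range)
open Finset.HasAntidiagonal (antidiagonal)

variable {X : Type*} {T : X → X} {A : Set X} {That : (X → ℝ) → X → ℝ} {f : X → ℝ} {s : ℝ}

/-- The generating function, at `s`, of the indicators of the sets `noReturnSet T A n`. -/
noncomputable def noReturnGenFun (T : X → X) (A : Set X) (s : ℝ) (x : X) : ℝ :=
  genFun (fun n => (noReturnSet T A n).indicator 1 x) s

/-- The integrand over `A` in the renewal equation `setIntegral_renewalTerm`: the convolution of
the indicators of the sets `noReturnSet T A n` with the iterates of `f`. -/
noncomputable def renewalTerm (T : X → X) (A : Set X) (That : (X → ℝ) → X → ℝ) (f : X → ℝ)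
    (n : ℕ) (x : X) : ℝ :=
  ∑ p ∈ antidiagonal n, (noReturnSet T A p.1).indicator 1 x * That^[p.2] f x

theorem summable_indicator_noReturnSet_mul_pow (hs : |s| < 1) (x : X) :
    Summable fun n => (noReturnSet T A n).indicator (1 : X → ℝ) x * s ^ n :=
  summable_mul_pow_of_abs_le (C := 1)
    (fun n => by by_cases hx : x ∈ noReturnSet T A n <;> simp [hx]) hs

theorem genFun_renewalTerm {x : X} (hs : |s| < 1) (hsum : Summable fun n => That^[n] f x * s ^ n) :
    genFun (fun n => renewalTerm T A That f n x) s =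
      noReturnGenFun T A s x * genFun (fun n => That^[n] f x) s :=
  genFun_sum_antidiagonal_mul (summable_indicator_noReturnSet_mul_pow hs x) hsum

theorem noReturnGenFun_nonneg (hs : 0 ≤ s) (x : X) : 0 ≤ noReturnGenFun T A s x :=
  tsum_nonneg fun n =>
    mul_nonneg (Set.indicator_nonneg (fun _ _ => zero_le_one) x) (pow_nonneg hs n)

theorem indicator_one_mul_eq (B : Set X) (g : X → ℝ) :
    (fun x => B.indicator 1 x * g x) = B.indicator g := by
  ext x
  by_cases hx : x ∈ B <;> simp [hx]

variable {S : Set X}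

theorem tendsto_div_apply_of_tendstoUniformlyOn {σ : ℕ → X → ℝ} {b : ℕ → ℝ} {x₀ : X}
    (hσ : TendstoUniformlyOn (fun n x => σ n x / b n) (fun _ => 1) atTop S) (hx₀ : x₀ ∈ S) :
    Tendsto (fun i : ℕ × X => σ i.1 i.2 / σ i.1 x₀) (atTop ×ˢ 𝓟 S) (𝓝 1) := by
  have hσ₀ := (hσ.tendsto_at hx₀).comp (tendsto_fst (g := 𝓟 S))
  have hdiv := (tendsto_prod_principal_iff.2 hσ).div hσ₀ one_ne_zero
  rw [div_one] at hdiv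
  refine hdiv.congr' ?_
  filter_upwards [hσ₀.eventually_ne one_ne_zero] with i hi
  exact div_div_div_cancel_right₀ (div_ne_zero_iff.1 hi).2 _ _

theorem apply_zero_pos_of_tendsto_sum_div {u b : ℕ → ℝ} (hu : Antitone u) (hu0 : ∀ n, 0 ≤ u n)
    {ℓ : ℝ} (hℓ : ℓ ≠ 0) (hub : Tendsto (fun n => (∑ k ∈ range n, u k) / b n) atTop (𝓝 ℓ)) :
    0 < u 0 := by
  refine (hu0 0).lt_of_ne' fun hu00 => hℓ (tendsto_nhds_unique hub ?_)
  have hzero : ∀ k, u k = 0 := fun k => le_antisymm (hu00 ▸ hu k.zero_le) (hu0 k)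
  simp [hzero]

variable [MeasurableSpace X] {μ : Measure X}

theorem setIntegral_indicator_noReturnSet_mul (hT : Measurable T) (hA : MeasurableSet A) (n : ℕ)
    (g : X → ℝ) : ∫ x in A, (noReturnSet T A n).indicator 1 x * g x ∂μ =
      ∫ x in noReturnSet T A n, g x ∂μ := by
  rw [indicator_one_mul_eq, setIntegral_indicator (measurableSet_noReturnSet hT hA n),
    Set.inter_eq_right.2 (noReturnSet_subset n)]

theorem setIntegral_indicator_noReturnSet (hT : Measurable T) (hA : MeasurableSet A) (n : ℕ) :
    ∫ x in A, (noReturnSet T A n).indicator 1 x ∂μ = μ.real (noReturnSet T A n) := by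
  simpa using setIntegral_indicator_noReturnSet_mul (μ := μ) hT hA n 1

theorem integrableOn_indicator_noReturnSet (hT : Measurable T) (hA : MeasurableSet A)
    (hA_fin : μ A < ⊤) (n : ℕ) :
    IntegrableOn ((noReturnSet T A n).indicator (1 : X → ℝ)) A μ :=
  (integrableOn_const hA_fin.ne).indicator (measurableSet_noReturnSet hT hA n)

theorem setIntegral_norm_indicator_noReturnSet_le (hT : Measurable T) (hA : MeasurableSet A)
    (hA_fin : μ A < ⊤) (n : ℕ) :
    ∫ x in A, ‖(noReturnSet T A n).indicator (1 : X → ℝ) x‖ ∂μ ≤ μ.real A := by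
  have hnorm : ∀ x, ‖(noReturnSet T A n).indicator (1 : X → ℝ) x‖ =
      (noReturnSet T A n).indicator 1 x := fun x =>
    Real.norm_of_nonneg (Set.indicator_nonneg (fun _ _ => zero_le_one) x)
  simp only [hnorm, setIntegral_indicator_noReturnSet hT hA]
  exact measureReal_mono (noReturnSet_subset n) hA_fin.ne

theorem integrableOn_noReturnGenFun (hT : Measurable T) (hA : MeasurableSet A)
    (hA_fin : μ A < ⊤) (hs : |s| < 1) : IntegrableOn (noReturnGenFun T A s) A μ :=
  integrable_genFun (integrableOn_indicator_noReturnSet hT hA hA_fin)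
    (setIntegral_norm_indicator_noReturnSet_le hT hA hA_fin) hs

theorem setIntegral_noReturnGenFun (hT : Measurable T) (hA : MeasurableSet A)
    (hA_fin : μ A < ⊤) (hs : |s| < 1) :
    ∫ x in A, noReturnGenFun T A s x ∂μ = genFun (fun n => μ.real (noReturnSet T A n)) s := by
  simp only [noReturnGenFun, ← setIntegral_indicator_noReturnSet hT hA]
  exact integral_genFun (integrableOn_indicator_noReturnSet hT hA hA_fin)
    (setIntegral_norm_indicator_noReturnSet_le hT hA hA_fin) hs

theorem integrable_renewalTerm (h : IsTransferOperator μ T That) (hT : Measurable T)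
    (hA : MeasurableSet A) (hf : Integrable f μ) (hf0 : ∫ x, f x ∂μ ≠ 0) (n : ℕ) :
    Integrable (renewalTerm T A That f n) μ := by
  refine integrable_finsetSum _ fun p _ => ?_
  rw [indicator_one_mul_eq]
  exact (h.integrable_iterate hf hf0 _).indicator (measurableSet_noReturnSet hT hA _)

theorem setIntegral_renewalTerm (h : IsTransferOperator μ T That) (hT : Measurable T)
    (hA : MeasurableSet A) (hf : Integrable f μ) (hf0 : ∫ x, f x ∂μ ≠ 0) (n : ℕ) :
    ∫ x in A, renewalTerm T A That f n x ∂μ = ∫ x in hittingSet T A (n + 1), f x ∂μ := by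
  have hrenewal := h.setIntegral_hittingSet_succ hT hA hf hf0 n 0
  simp only [renewalTerm]
  rw [integral_finsetSum]
  · simpa only [setIntegral_indicator_noReturnSet_mul hT hA, add_zero,
      Function.iterate_zero, id] using hrenewal.symm
  · intro p _
    rw [indicator_one_mul_eq]
    exact ((h.integrable_iterate hf hf0 _).indicator (measurableSet_noReturnSet hT hA _)).restrict

theorem setIntegral_norm_renewalTerm_le (h : IsTransferOperator μ T That) (hT : Measurable T)
    (hA : MeasurableSet A) (hf : Integrable f μ) (hf0 : ∫ x, f x ∂μ ≠ 0) (hf_nonneg : 0 ≤ᵐ[μ] f)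
    (n : ℕ) : ∫ x in A, ‖renewalTerm T A That f n x‖ ∂μ ≤ ∫ x, f x ∂μ := by
  have hnorm : ∀ᵐ x ∂μ.restrict A,
      ‖renewalTerm T A That f n x‖ = renewalTerm T A That f n x := by
    filter_upwards [ae_restrict_of_ae (ae_all_iff.2 (h.ae_nonneg_iterate hf hf0 hf_nonneg))]
      with x hx
    exact Real.norm_of_nonneg (Finset.sum_nonneg fun p _ =>
      mul_nonneg (Set.indicator_nonneg (fun _ _ => zero_le_one) x) (hx p.2))
  rw [integral_congr_ae hnorm, setIntegral_renewalTerm h hT hA hf hf0]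
  exact setIntegral_le_integral hf hf_nonneg

theorem genFun_renewalTerm_ae_eq (hS : ∀ᵐ x ∂μ.restrict A, x ∈ S)
    (hdec : ∀ x ∈ S, Antitone fun n => That^[n] f x) (hnonneg : ∀ x ∈ S, ∀ n, 0 ≤ That^[n] f x)
    (hs : |s| < 1) :
    (fun x => genFun (fun n => renewalTerm T A That f n x) s) =ᵐ[μ.restrict A]
      fun x => noReturnGenFun T A s x * genFun (fun n => That^[n] f x) s :=
  hS.mono fun x hx => genFun_renewalTerm hs
    (summable_mul_pow_of_antitone_of_nonneg (hdec x hx) (hnonneg x hx) hs)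

theorem integrableOn_noReturnGenFun_mul_genFun (h : IsTransferOperator μ T That)
    (hT : Measurable T) (hA : MeasurableSet A) (hf : Integrable f μ) (hf0 : ∫ x, f x ∂μ ≠ 0)
    (hf_nonneg : 0 ≤ᵐ[μ] f) (hS : ∀ᵐ x ∂μ.restrict A, x ∈ S)
    (hdec : ∀ x ∈ S, Antitone fun n => That^[n] f x) (hnonneg : ∀ x ∈ S, ∀ n, 0 ≤ That^[n] f x)
    (hs : |s| < 1) :
    IntegrableOn (fun x => noReturnGenFun T A s x * genFun (fun n => That^[n] f x) s) A μ :=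
  (integrable_genFun (fun n => (integrable_renewalTerm h hT hA hf hf0 n).restrict)
    (setIntegral_norm_renewalTerm_le h hT hA hf hf0 hf_nonneg) hs).congr
    (genFun_renewalTerm_ae_eq hS hdec hnonneg hs)

theorem setIntegral_noReturnGenFun_mul_genFun (h : IsTransferOperator μ T That)
    (hT : Measurable T) (hA : MeasurableSet A) (hf : Integrable f μ) (hf0 : ∫ x, f x ∂μ ≠ 0)
    (hf_nonneg : 0 ≤ᵐ[μ] f) (hS : ∀ᵐ x ∂μ.restrict A, x ∈ S)
    (hdec : ∀ x ∈ S, Antitone fun n => That^[n] f x) (hnonneg : ∀ x ∈ S, ∀ n, 0 ≤ That^[n] f x)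
    (hs : |s| < 1) :
    ∫ x in A, noReturnGenFun T A s x * genFun (fun n => That^[n] f x) s ∂μ =
      genFun (fun n => ∫ x in hittingSet T A (n + 1), f x ∂μ) s := by
  rw [← integral_congr_ae (genFun_renewalTerm_ae_eq hS hdec hnonneg hs),
    integral_genFun (fun n => (integrable_renewalTerm h hT hA hf hf0 n).restrict)
      (setIntegral_norm_renewalTerm_le h hT hA hf hf0 hf_nonneg) hs]
  simp only [setIntegral_renewalTerm h hT hA hf hf0]

theorem genFun_measureReal_noReturnSet_pos (hA0 : 0 < μ A) (hA_fin : μ A < ⊤)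
    (hs : s ∈ Set.Ioo 0 1) : 0 < genFun (fun n => μ.real (noReturnSet T A n)) s := by
  have hsum := summable_mul_pow_of_antitone_of_nonneg (antitone_measureReal_noReturnSet (T := T)
    hA_fin) (fun _ => measureReal_nonneg) (abs_lt_one_of_mem_Ioo hs)
  exact (measureReal_noReturnSet_zero_pos hA0 hA_fin).trans_le
    (apply_zero_le_genFun (fun _ => measureReal_nonneg) hs.1.le hsum)

theorem tendsto_one_sub_mul_genFun_noReturnSet_mul (h : IsTransferOperator μ T That)
    (hT : Measurable T) (hA : MeasurableSet A) (hA0 : 0 < μ A) (hA_fin : μ A < ⊤)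
    (hsweep : ∀ᵐ x ∂μ, ∃ n, T^[n] x ∈ A) (hf : Integrable f μ) (hf_nonneg : 0 ≤ᵐ[μ] f)
    (hf_one : ∫ x, f x ∂μ = 1) (hS : ∀ᵐ x ∂μ.restrict A, x ∈ S)
    (hdec : ∀ x ∈ S, Antitone fun n => That^[n] f x) (hnonneg : ∀ x ∈ S, ∀ n, 0 ≤ That^[n] f x)
    {v : ℝ → ℝ} (hv : ∀ᶠ s in 𝓝[<] 1, v s ≠ 0)
    (hUv : Tendsto (fun i : ℝ × X => genFun (fun n => That^[n] f i.2) i.1 / v i.1)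
      (𝓝[<] 1 ×ˢ 𝓟 S) (𝓝 1)) :
    Tendsto (fun s => (1 - s) * genFun (fun n => μ.real (noReturnSet T A n)) s * v s)
      (𝓝[<] 1) (𝓝 1) := by
  have hf0 : ∫ x, f x ∂μ ≠ 0 := by simp [hf_one]
  have hint := fun {s : ℝ} (hs : |s| < 1) =>
    integrableOn_noReturnGenFun_mul_genFun h hT hA hf hf0 hf_nonneg hS hdec hnonneg hs
  have heq := fun {s : ℝ} (hs : |s| < 1) =>
    setIntegral_noReturnGenFun_mul_genFun h hT hA hf hf0 hf_nonneg hS hdec hnonneg hs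
  have hs_lt : ∀ᶠ s : ℝ in 𝓝[<] 1, |s| < 1 :=
    eventually_mem_Ioo_nhdsLT_one.mono fun s hs => abs_lt_one_of_mem_Ioo hs
  have havg := tendsto_integral_mul_div_integral (q := noReturnGenFun T A)
    (F := fun s x => genFun (fun n => That^[n] f x) s / v s) hS
    (hs_lt.mono fun s hs => integrableOn_noReturnGenFun hT hA hA_fin hs)
    (hs_lt.mono fun s hs => by simpa only [mul_div_assoc] using (hint hs).div_const (v s))
    (eventually_mem_Ioo_nhdsLT_one.mono fun s hs => ae_of_all _ (noReturnGenFun_nonneg hs.1.le))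
    (by
      filter_upwards [hs_lt, eventually_mem_Ioo_nhdsLT_one] with s hs hs'
      rw [setIntegral_noReturnGenFun hT hA hA_fin hs]
      exact genFun_measureReal_noReturnSet_pos hA0 hA_fin hs') hUv
  have hvisit := (tendsto_setIntegral_hittingSet hT hA hsweep hf).comp (tendsto_add_atTop_nat 1)
  rw [hf_one] at hvisit
  have habel := tendsto_one_sub_mul_genFun hvisit
  have hlim := habel.div havg one_ne_zero
  rw [div_one] at hlim
  refine hlim.congr' ?_
  filter_upwards [hs_lt, hv, habel.eventually_ne one_ne_zero] with s hs hvs hne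
  have hρ := right_ne_zero_of_mul hne
  simp only [Function.comp_def] at hρ
  simp only [Pi.div_apply, Function.comp_def, ← mul_div_assoc, integral_div, heq hs,
    setIntegral_noReturnGenFun hT hA hA_fin hs]
  field_simp

theorem tendsto_one_sub_mul_genFun_mul_genFun_iterate (h : IsTransferOperator μ T That)
    (hT : Measurable T) (hA : MeasurableSet A) (hA0 : 0 < μ A) (hA_fin : μ A < ⊤)
    (hsweep : ∀ᵐ x ∂μ, ∃ n, T^[n] x ∈ A) (hf : Integrable f μ) (hf_nonneg : 0 ≤ᵐ[μ] f)
    (hf_one : ∫ x, f x ∂μ = 1) (hS : ∀ᵐ x ∂μ.restrict A, x ∈ S)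
    (hdec : ∀ x ∈ S, Antitone fun n => That^[n] f x) (hnonneg : ∀ x ∈ S, ∀ n, 0 ≤ That^[n] f x)
    {b : ℕ → ℝ} (hb : TendstoUniformlyOn (fun n x => (∑ k ∈ range n, That^[k] f x) / b n)
      (fun _ => 1) atTop S) :
    Tendsto (fun i : ℝ × X => (1 - i.1) * genFun (fun n => μ.real (noReturnSet T A n)) i.1 *
      genFun (fun n => That^[n] f i.2) i.1) (𝓝[<] 1 ×ˢ 𝓟 S) (𝓝 1) := by
  have : (ae (μ.restrict A)).NeBot := ae_restrict_neBot.2 hA0.ne'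
  obtain ⟨x₀, hx₀⟩ := hS.exists
  have hsum := fun x (hx : x ∈ S) s (hs : s ∈ Set.Ioo (0 : ℝ) 1) =>
    summable_mul_pow_of_antitone_of_nonneg (hdec x hx) (hnonneg x hx) (abs_lt_one_of_mem_Ioo hs)
  have hpos := apply_zero_pos_of_tendsto_sum_div (hdec x₀ hx₀) (hnonneg x₀ hx₀) one_ne_zero
    (hb.tendsto_at hx₀)
  have hU₀ : ∀ᶠ s in 𝓝[<] 1, genFun (fun n => That^[n] f x₀) s ≠ 0 :=
    eventually_mem_Ioo_nhdsLT_one.mono fun s hs => (hpos.trans_le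
      (apply_zero_le_genFun (hnonneg x₀ hx₀) hs.1.le (hsum x₀ hx₀ s hs))).ne'
  have hratio := tendsto_genFun_div_genFun hnonneg (hnonneg x₀ hx₀) hpos hsum (hsum x₀ hx₀)
    (tendsto_div_apply_of_tendstoUniformlyOn hb hx₀)
  have hbase := (tendsto_one_sub_mul_genFun_noReturnSet_mul h hT hA hA0 hA_fin hsweep hf hf_nonneg
    hf_one hS hdec hnonneg hU₀ hratio).comp (tendsto_fst (g := 𝓟 S))
  have hlim := hbase.mul hratio
  rw [one_mul] at hlim
  refine hlim.congr' ?_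
  filter_upwards [tendsto_fst.eventually hU₀] with i hi
  simp only [Function.comp_apply]
  field_simp

end Renewal

section UniformlyReturning

variable {X : Type*} [MeasurableSpace X] {μ : Measure X} {T : X → X} {A : Set X}
  {That : (X → ℝ) → X → ℝ} {f : X → ℝ}

theorem uniform_set_is_uniformly_returning_general
    (hT : MeasurePreserving T μ μ) (hThat : IsTransferOperator μ T That)
    (hf_int : Integrable f μ) (hf_nonneg : 0 ≤ᵐ[μ] f) (hf_density : ∫ x, f x ∂μ = 1)
    (hA : MeasurableSet A) (hA0 : 0 < μ A) (hA_fin : μ A < ⊤)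
    (hsweep : ∀ᵐ x ∂μ, ∃ n, T^[n] x ∈ A) {b : ℕ → ℝ}
    (hUnif : ∃ N : Set X, μ N = 0 ∧
      TendstoUniformlyOn (fun n x => (∑ k ∈ Finset.range n, That^[k] f x) / b n)
        (fun _ => 1) atTop (A \ N))
    {α : ℝ} (hα : α ∈ Set.Ioc (0 : ℝ) 1)
    (hW : IsRegularlyVarying (wanderingRate μ T A) (1 - α))
    (hdec : ∀ᵐ x ∂μ, x ∈ A → Antitone fun n : ℕ => That^[n] f x) :
    ∃ N : Set X, μ N = 0 ∧
      TendstoUniformlyOn (fun n x => wanderingRate μ T A n * That^[n] f x)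
        (fun _ => 1 / (Real.Gamma α * Real.Gamma (2 - α))) atTop (A \ N) := by
  obtain ⟨N, hN, hU⟩ := hUnif
  have hf0 : ∫ x, f x ∂μ ≠ 0 := by simp [hf_density]
  let S : Set X := {x | x ∈ A ∧ x ∉ N ∧ (Antitone fun n => That^[n] f x) ∧ ∀ n, 0 ≤ That^[n] f x}
  have hSA : S ⊆ A := fun x hx => hx.1
  have hS_dec : ∀ x ∈ S, Antitone fun n => That^[n] f x := fun x hx => hx.2.2.1
  have hS_nonneg : ∀ x ∈ S, ∀ n, 0 ≤ That^[n] f x := fun x hx => hx.2.2.2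
  have hAS : ∀ᵐ x ∂μ, x ∈ A → x ∈ S := by
    filter_upwards [measure_eq_zero_iff_ae_notMem.1 hN, hdec,
      ae_all_iff.2 (hThat.ae_nonneg_iterate hf_int hf0 hf_nonneg)] with x hxN hx_dec hx_nonneg hxA
    exact ⟨hxA, hxN, hx_dec hxA, hx_nonneg⟩
  have hgen := tendsto_one_sub_mul_genFun_mul_genFun_iterate hThat hT.measurable hA hA0 hA_fin
    hsweep hf_int hf_nonneg hf_density ((ae_restrict_iff' hA).2 hAS) hS_dec hS_nonneg
    (hU.mono fun x hx => ⟨hx.1, hx.2.1⟩)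
  refine ⟨A \ S, ae_le_set.1 hAS, ?_⟩
  rw [sdiff_sdiff_right_self, inf_eq_right.2 hSA, ← tendsto_prod_principal_iff]
  simp only [wanderingRate_eq_sum hT hA hA_fin] at hW ⊢
  exact tendsto_sum_mul_apply_of_tendsto_genFun (u := fun x n => That^[n] f x)
    (antitone_measureReal_noReturnSet hA_fin) (fun _ => measureReal_nonneg)
    (measureReal_noReturnSet_zero_pos hA0 hA_fin) hα.1 (by linarith [hα.2]) hW hS_dec hS_nonneg
    hgen

end UniformlyReturning

/-- Proposition 1 of the paper: if `A` is a uniform set for `f`, the wandering rate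
`(W_n)` is regularly varying with exponent `1 - α` for some `α ∈ (0,1]`, and the
sequence `(T̂ⁿ f)|_A` is decreasing, then `W_n · T̂ⁿ f → 1/(Γ(α)Γ(2-α))` μ-a.e.
uniformly on `A`; in particular `A` is uniformly returning for `f`. -/
theorem uniform_set_is_uniformly_returning {X : Type*} [MeasurableSpace X]
    (μ : Measure X) [SigmaFinite μ] (hμ : μ Set.univ = ⊤)
    (T : X → X) (hT : MeasurePreserving T μ μ)
    (hcons : Conservative T μ) (herg : Ergodic T μ)
    -- the transfer operator, characterized by `∫_B T̂g dμ = ∫_{T⁻¹B} g dμ`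
    (That : (X → ℝ) → (X → ℝ))
    (hThat : ∀ g : X → ℝ, Integrable g μ → ∀ B : Set X, MeasurableSet B →
      ∫ x in B, That g x ∂μ = ∫ x in T ⁻¹' B, g x ∂μ)
    -- `f` is a probability density w.r.t. `μ`
    (f : X → ℝ) (hf_nonneg : 0 ≤ f) (hf_int : Integrable f μ)
    (hf_density : ∫ x, f x ∂μ = 1)
    (A : Set X) (hA : MeasurableSet A) (hA0 : 0 < μ A) (hAfin : μ A < ⊤)
    -- the wandering rate of `A`
    (W : ℕ → ℝ)
    (hW : ∀ n, W n = (μ (⋃ k ∈ Finset.range (n + 1), T^[k] ⁻¹' A)).toReal)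
    -- `A` is uniform for `f` with normalizing sequence `b`
    (b : ℕ → ℝ) (hb_pos : ∀ n, 0 < b n)
    (hUnif : ∃ N : Set X, μ N = 0 ∧
      TendstoUniformlyOn
        (fun n x => (∑ k ∈ Finset.range n, That^[k] f x) / b n)
        (fun _ => 1) atTop (A \ N))
    -- `(W_n)` is regularly varying with exponent `1 - α`, `α ∈ (0,1]`
    (α : ℝ) (hα : α ∈ Set.Ioc (0 : ℝ) 1)
    (L : ℝ → ℝ) (hL : ∀ c > 0, Tendsto (fun t => L (c * t) / L t) atTop (nhds 1))
    (hWreg : ∀ᶠ n : ℕ in atTop, W n = (n : ℝ) ^ (1 - α) * L n)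
    -- `(T̂ⁿ f)|_A` is decreasing
    (hdec : ∀ x ∈ A, Antitone fun n : ℕ => That^[n] f x) :
    ∃ N : Set X, μ N = 0 ∧
      TendstoUniformlyOn (fun n x => W n * That^[n] f x)
        (fun _ => 1 / (Real.Gamma α * Real.Gamma (2 - α))) atTop (A \ N) := by
  obtain ⟨N, hN, hU⟩ := hUnif
  obtain rfl : W = wanderingRate μ T A := funext hW
  exact uniform_set_is_uniformly_returning_general hT hThat hf_int (ae_of_all μ hf_nonneg)
    hf_density hA hA0 hAfin (ae_exists_iterate_mem hcons herg hA hA0.ne') ⟨N, hN, hU⟩ hα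
    (isRegularlyVarying_of_eventually_eq_rpow_mul (monotone_wanderingRate hT hA hAfin)
      (wanderingRate_pos hT hA hA0 hAfin) hL hWreg) (ae_of_all μ hdec)
end

section
/- The set A_1 = (1/2, 1] is uniformly returning for the Farey map for every f ∈ D: there exists a positive increasing sequence b_n (namely b_n ∼ log n) such that b_n · T̂^n f → 1 uniformly on A_1, where T̂ is the Farey transfer operator. -/
open MeasureTheory Filter

/-- The infinite invariant measure `dμ = (1/x) dλ` on `[0,1]`. -/
noncomputable def fareyMeasure : Measure ℝ :=
  (volume.restrict (Set.Icc (0 : ℝ) 1)).withDensity fun x => ENNReal.ofReal (1 / x)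

/-- The transfer operator of the Farey map with respect to `dμ = (1/x)dλ`. -/
noncomputable def fareyTransfer (f : ℝ → ℝ) (x : ℝ) : ℝ :=
  (f (x / (x + 1)) + x * f (1 / (x + 1))) / (x + 1)

/-!
For `n ≥ 1` the function `T̂ⁿ f` increases on `[1/2, 1]`, with values between
`T̂ⁿ f (1/2) = T̂ⁿ⁺¹ f 1` and `T̂ⁿ f 1`, so it is enough to prove `log n · T̂ⁿ f 1 → ∫ f dμ`. In the
coordinate `y = x / (x + 1)`, the operator averages `f` over `y` and `1 - y`. For nonnegative,
increasing and concave `f` this average is concave and symmetric about `1/2`, hence increasing on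
`(0, 1/2]`, so `T̂` preserves the three properties.

Let `M g t` be the `μ`-mass of `g` on `[1/t, 1]`. The Farey map pulls `[1/t, 1]` back to
`[1/(t+1), t/(t+1)]`, so `M g (t+1)` exceeds `M (T̂ g) t` by the mass of `g` on `[t/(t+1), 1]`,
which lies between `log ((t+1)/t) · T̂ g 1` and `log ((t+1)/t) · g 1`. Summing the lower bounds
gives `log (n+1) · T̂ⁿ g 1 ≤ M g (n+1)`. Summing the upper bounds `n` times from `t = n+1` leaves
the Cesàro mean of the values `T̂ʲ g 1` as an error term, which tends to zero by the lower bound.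
-/

section

open Set Topology

lemma tendstoUniformlyOn_const_of_le_of_le {ι α : Type*} {p : Filter ι} {s : Set α}
    {F : ι → α → ℝ} {l u : ι → ℝ} {c : ℝ} (hl : Tendsto l p (𝓝 c)) (hu : Tendsto u p (𝓝 c))
    (hlF : ∀ᶠ n in p, ∀ x ∈ s, l n ≤ F n x) (hFu : ∀ᶠ n in p, ∀ x ∈ s, F n x ≤ u n) :
    TendstoUniformlyOn F (fun _ => c) p s := by
  rw [← tendsto_prod_principal_iff]
  exact tendsto_of_tendsto_of_tendsto_of_le_of_le' (hl.comp tendsto_fst) (hu.comp tendsto_fst)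
    (eventually_prod_principal_iff.2 hlF) (eventually_prod_principal_iff.2 hFu)

lemma tendsto_log_natCast_atTop : Tendsto (fun n : ℕ => Real.log n) atTop atTop :=
  Real.tendsto_log_atTop.comp tendsto_natCast_atTop_atTop

lemma tendsto_log_natCast_add_div_log (a : ℝ) :
    Tendsto (fun n : ℕ => Real.log (n + a) / Real.log n) atTop (𝓝 1) := by
  have hdiff : Tendsto (fun n : ℕ => Real.log (n + a) - Real.log n) atTop (𝓝 0) :=
    (Real.tendsto_log_comp_add_sub_log a).comp tendsto_natCast_atTop_atTop
  have h := (hdiff.div_atTop tendsto_log_natCast_atTop).const_add 1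
  rw [add_zero] at h
  refine h.congr' ?_
  filter_upwards [tendsto_log_natCast_atTop.eventually_ne_atTop 0] with n hn
  rw [sub_div, div_self hn, add_sub_cancel]

lemma tendsto_log_natCast_add_mul {c : ℕ → ℝ} {L : ℝ}
    (hc : Tendsto (fun n : ℕ => Real.log n * c n) atTop (𝓝 L)) (a : ℝ) :
    Tendsto (fun n : ℕ => Real.log (n + a) * c n) atTop (𝓝 L) := by
  have h := (tendsto_log_natCast_add_div_log a).mul hc
  rw [one_mul] at h
  refine h.congr' ?_
  filter_upwards [tendsto_log_natCast_atTop.eventually_ne_atTop 0] with n hn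
  rw [← mul_assoc, div_mul_cancel₀ _ hn]

lemma monotoneOn_inter_Iic_of_concaveOn_of_reflection {g : ℝ → ℝ} {s : Set ℝ} {c : ℝ}
    (hg : ConcaveOn ℝ s g) (hs : ∀ y ∈ s, 2 * c - y ∈ s) (hsymm : ∀ y ∈ s, g (2 * c - y) = g y) :
    MonotoneOn g (s ∩ Iic c) := by
  rintro y ⟨hys, -⟩ z ⟨-, hzc⟩ hyz
  rw [mem_Iic] at hzc
  have hmin := hg.min_le_of_mem_Icc hys (hs y hys) (z := z) ⟨hyz, by linarith⟩
  rwa [hsymm y hys, min_self] at hmin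

lemma concaveOn_div_add_one : ConcaveOn ℝ (Ioi (-1)) fun x : ℝ => x / (x + 1) := by
  have hinv : ConvexOn ℝ (Ioi (-1)) fun x : ℝ => (x + 1)⁻¹ := by
    refine (((convexOn_zpow (𝕜 := ℝ) (-1)).translate_left 1).subset
      (fun x hx => ?_) (convex_Ioi _)).congr fun x _ => zpow_neg_one (x + 1)
    exact neg_lt_iff_pos_add'.1 (mem_Ioi.1 hx)
  refine ((concaveOn_const 1 (convex_Ioi _)).sub hinv).congr fun x hx => ?_
  have hx' : x + 1 ≠ 0 := (neg_lt_iff_pos_add.1 (mem_Ioi.1 hx)).ne'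
  simp only [Pi.sub_apply]
  field_simp
  ring

lemma div_add_one_mem_Ioo {x : ℝ} (hx : 0 < x) : x / (x + 1) ∈ Ioo (0 : ℝ) 1 :=
  ⟨by positivity, by rw [div_lt_one (by linarith)]; linarith⟩

lemma one_sub_div_add_one {x : ℝ} (hx : x + 1 ≠ 0) : 1 - x / (x + 1) = 1 / (x + 1) := by
  rw [eq_div_iff hx, sub_mul, div_mul_cancel₀ _ hx]
  ring

lemma one_sub_mem_Ioo {x : ℝ} (hx : x ∈ Ioo (0 : ℝ) 1) : 1 - x ∈ Ioo (0 : ℝ) 1 :=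
  ⟨sub_pos.2 hx.2, sub_lt_self 1 hx.1⟩

/-- The class `D` without its differentiability and normalization requirements, on an arbitrary
set `s`: densities themselves live on `(0, 1)`, their images under `T̂` on `(0, 1]`. -/
structure IsMonotoneConcaveOn (g : ℝ → ℝ) (s : Set ℝ) : Prop where
  nonneg : ∀ x ∈ s, 0 ≤ g x
  monotoneOn : MonotoneOn g s
  concaveOn : ConcaveOn ℝ s g

lemma isMonotoneConcaveOn_of_deriv {f : ℝ → ℝ} {s : Set ℝ} (hs : IsOpen s) (hs' : Convex ℝ s)
    (hf : ContDiffOn ℝ 2 f s) (hf_nonneg : ∀ x ∈ s, 0 ≤ f x) (hf_deriv : ∀ x ∈ s, 0 ≤ deriv f x)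
    (hf_deriv2 : ∀ x ∈ s, deriv (deriv f) x ≤ 0) : IsMonotoneConcaveOn f s where
  nonneg := hf_nonneg
  monotoneOn := by
    rw [← hs.interior_eq] at hf_deriv
    exact monotoneOn_of_deriv_nonneg hs' hf.continuousOn
      ((hf.differentiableOn two_ne_zero).mono interior_subset) hf_deriv
  concaveOn :=
    concaveOn_of_deriv2_nonpos' hs' (hf.differentiableOn two_ne_zero)
      ((hf.deriv_of_isOpen (m := 1) hs (by norm_num)).differentiableOn one_ne_zero) hf_deriv2

/-- The symmetrized average `T̂ g` in the coordinate `y = x / (x + 1)`; the points `y` and `1 - y`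
are the two preimages of `x` under the Farey map. -/
def fareyFold (g : ℝ → ℝ) (y : ℝ) : ℝ := (1 - y) * g y + y * g (1 - y)

lemma fareyTransfer_eq_fareyFold (g : ℝ → ℝ) {x : ℝ} (hx : x + 1 ≠ 0) :
    fareyTransfer g x = fareyFold g (x / (x + 1)) := by
  rw [fareyTransfer, fareyFold, one_sub_div_add_one hx]
  field_simp

lemma fareyTransfer_one (g : ℝ → ℝ) : fareyTransfer g 1 = g (1 / 2) := by
  norm_num [fareyTransfer]

lemma concaveOn_fareyFold {g : ℝ → ℝ} (hg : IsMonotoneConcaveOn g (Ioo 0 1)) :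
    ConcaveOn ℝ (Ioo 0 1) (fareyFold g) := by
  have hweight : ConcaveOn ℝ (Ioo (0 : ℝ) 1) fun y => 1 - y :=
    (concaveOn_const 1 (convex_Ioo 0 1)).sub (convexOn_id (convex_Ioo 0 1))
  have hanti : AntitoneOn (fun y : ℝ => 1 - y) (Ioo 0 1) := fun _ _ _ _ h => sub_le_sub_left h 1
  have hP : ConcaveOn ℝ (Ioo 0 1) fun y => (1 - y) * g y :=
    hweight.mul hg.concaveOn (fun _ hy => (one_sub_mem_Ioo hy).1.le) hg.nonneg
      (hanti.antivaryOn hg.monotoneOn)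
  have hreflect : ConcaveOn ℝ (Ioo 0 1) fun y => y * g (1 - y) := by
    refine ((hP.comp_affineMap (AffineMap.lineMap 1 0)).subset
      (fun y hy => ?_) (convex_Ioo 0 1)).congr fun y _ => ?_
    · simpa [AffineMap.lineMap_apply] using And.symm hy
    · simp [AffineMap.lineMap_apply, neg_add_eq_sub]
  exact hP.add hreflect

lemma monotoneOn_fareyFold {g : ℝ → ℝ} (hg : IsMonotoneConcaveOn g (Ioo 0 1)) :
    MonotoneOn (fareyFold g) (Ioc 0 (1 / 2)) := by
  refine (monotoneOn_inter_Iic_of_concaveOn_of_reflection (c := 1 / 2) (concaveOn_fareyFold hg)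
    (fun y hy => ?_) fun y _ => ?_).mono fun y hy => ⟨⟨hy.1, by linarith [hy.2]⟩, hy.2⟩
  · simpa using And.symm hy
  · simp only [fareyFold]
    ring_nf

lemma isMonotoneConcaveOn_fareyTransfer {g : ℝ → ℝ} (hg : IsMonotoneConcaveOn g (Ioo 0 1)) :
    IsMonotoneConcaveOn (fareyTransfer g) (Ioc 0 1) := by
  have hpos : ∀ x ∈ Ioc (0 : ℝ) 1, 0 < x + 1 := fun x hx => add_pos hx.1 one_pos
  have hmaps : MapsTo (fun x : ℝ => x / (x + 1)) (Ioc 0 1) (Ioc 0 (1 / 2)) := fun x hx =>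
    ⟨(div_add_one_mem_Ioo hx.1).1, by
      rw [div_le_div_iff₀ (hpos x hx) two_pos]; linarith [hx.2]⟩
  have hmono : MonotoneOn (fun x : ℝ => x / (x + 1)) (Ioc 0 1) := fun x hx y hy hxy => by
    rw [div_le_div_iff₀ (hpos x hx) (hpos y hy)]
    linarith
  have hcont : ContinuousOn (fun x : ℝ => x / (x + 1)) (Ioc 0 1) :=
    continuousOn_id.div (by fun_prop) fun x hx => (hpos x hx).ne'
  have heq : EqOn (fareyFold g ∘ fun x => x / (x + 1)) (fareyTransfer g) (Ioc 0 1) := fun x hx =>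
    (fareyTransfer_eq_fareyFold g (hpos x hx).ne').symm
  refine ⟨fun x hx => ?_, ((monotoneOn_fareyFold hg).comp hmono hmaps).congr heq,
    ConcaveOn.congr (ConcaveOn.comp ?_ ?_ ?_) heq⟩
  · rw [← heq hx]
    have hy := div_add_one_mem_Ioo hx.1
    have hy' := one_sub_mem_Ioo hy
    exact add_nonneg (mul_nonneg hy'.1.le (hg.nonneg _ hy)) (mul_nonneg hy.1.le (hg.nonneg _ hy'))
  · exact (concaveOn_fareyFold hg).subset
      (image_subset_iff.2 fun x hx => div_add_one_mem_Ioo hx.1)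
      (isPreconnected_Ioc.image _ hcont).convex
  · exact concaveOn_div_add_one.subset (Ioc_subset_Ioi_self.trans (Ioi_subset_Ioi (by norm_num)))
      (convex_Ioc 0 1)
  · exact (monotoneOn_fareyFold hg).mono hmaps.image_subset

namespace IsMonotoneConcaveOn

variable {g : ℝ → ℝ}

lemma Ioo_of_Ioc (hg : IsMonotoneConcaveOn g (Ioc 0 1)) : IsMonotoneConcaveOn g (Ioo 0 1) where
  nonneg x hx := hg.nonneg x (Ioo_subset_Ioc_self hx)
  monotoneOn := hg.monotoneOn.mono Ioo_subset_Ioc_self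
  concaveOn := hg.concaveOn.subset Ioo_subset_Ioc_self (convex_Ioo 0 1)

lemma iterate_fareyTransfer (hg : IsMonotoneConcaveOn g (Ioc 0 1)) (n : ℕ) :
    IsMonotoneConcaveOn (fareyTransfer^[n] g) (Ioc 0 1) := by
  induction n generalizing g with
  | zero => exact hg
  | succ _ ih => exact ih (isMonotoneConcaveOn_fareyTransfer hg.Ioo_of_Ioc)

lemma one_nonneg (hg : IsMonotoneConcaveOn g (Ioc 0 1)) : 0 ≤ g 1 :=
  hg.nonneg 1 (right_mem_Ioc.2 one_pos)

lemma antitone_iterate_fareyTransfer_one (hg : IsMonotoneConcaveOn g (Ioc 0 1)) :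
    Antitone fun n => fareyTransfer^[n] g 1 := by
  refine antitone_nat_of_succ_le fun n => ?_
  rw [Function.iterate_succ_apply', fareyTransfer_one]
  exact (hg.iterate_fareyTransfer n).monotoneOn (by norm_num) (by norm_num) (by norm_num)

end IsMonotoneConcaveOn

lemma integral_fareyTransfer_div {g : ℝ → ℝ} {a b : ℝ} (hg : ContinuousOn g (Ioo 0 1))
    (ha : 0 < a) (hb : 0 < b) :
    ∫ x in a..b, fareyTransfer g x / x =
      ∫ y in (a / (a + 1))..(b / (b + 1)), (g y / y + g (1 - y) / (1 - y)) := by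
  have hpos : ∀ x ∈ uIcc a b, 0 < x := fun x hx => (lt_min ha hb).trans_le hx.1
  rw [← intervalIntegral.integral_comp_mul_deriv' (f := fun x => x / (x + 1))
    (f' := fun x => 1 / (x + 1) ^ 2)]
  · refine intervalIntegral.integral_congr fun x hx => ?_
    have hx0 := hpos x hx
    simp only [Function.comp_apply]
    rw [one_sub_div_add_one (by positivity), fareyTransfer]
    field_simp
  · intro x hx
    have hx0 := hpos x hx
    have hx1 : x + 1 ≠ 0 := by positivity
    exact ((hasDerivAt_id x).div ((hasDerivAt_id x).add_const 1) hx1).congr_deriv (by simp)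
  · refine continuousOn_const.div (by fun_prop) fun x hx => ?_
    have hx0 := hpos x hx
    positivity
  · have hdiv : ContinuousOn (fun y => g y / y) (Ioo 0 1) :=
      hg.div continuousOn_id fun y hy => hy.1.ne'
    refine (hdiv.add (hdiv.comp (by fun_prop) fun y => one_sub_mem_Ioo)).mono ?_
    exact image_subset_iff.2 fun x hx => div_add_one_mem_Ioo (hpos x hx)

lemma intervalIntegrable_div_of_continuousOn {g : ℝ → ℝ} {a b : ℝ}
    (hg : ContinuousOn g (Ioo 0 1)) (ha : a ∈ Ioo (0 : ℝ) 1) (hb : b ∈ Ioo (0 : ℝ) 1) :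
    IntervalIntegrable (fun x => g x / x) volume a b :=
  ((hg.div continuousOn_id fun _ hx => hx.1.ne').mono
    (ordConnected_Ioo.uIcc_subset ha hb)).intervalIntegrable

lemma integral_fareyTransfer_div_one {g : ℝ → ℝ} {a : ℝ} (hg : ContinuousOn g (Ioo 0 1))
    (ha : 0 < a) :
    ∫ x in a..1, fareyTransfer g x / x = ∫ y in (a / (a + 1))..(1 / (a + 1)), g y / y := by
  have hA := div_add_one_mem_Ioo ha
  have hA' := one_sub_mem_Ioo hA
  have hhalf : (1 / 2 : ℝ) ∈ Ioo (0 : ℝ) 1 := by norm_num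
  have hright : IntervalIntegrable (fun y => g (1 - y) / (1 - y)) volume (a / (a + 1)) (1 / 2) := by
    have h := (intervalIntegrable_div_of_continuousOn hg hA' hhalf).comp_sub_left 1
    norm_num at h
    exact h
  rw [integral_fareyTransfer_div hg ha one_pos, one_add_one_eq_two,
    intervalIntegral.integral_add (intervalIntegrable_div_of_continuousOn hg hA hhalf) hright,
    intervalIntegral.integral_comp_sub_left (fun y => g y / y) 1, sub_half,
    intervalIntegral.integral_add_adjacent_intervals
      (intervalIntegrable_div_of_continuousOn hg hA hhalf)
      (intervalIntegrable_div_of_continuousOn hg hhalf hA'),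
    one_sub_div_add_one (by positivity)]

section MonotoneOn

variable {g : ℝ → ℝ} {p q : ℝ}

lemma intervalIntegrable_div_of_monotoneOn (hg : MonotoneOn g (Icc p q)) (hp : 0 < p)
    (hpq : p ≤ q) : IntervalIntegrable (fun x => g x / x) volume p q := by
  simp only [div_eq_mul_inv]
  rw [← uIcc_of_le hpq] at hg
  refine hg.intervalIntegrable.mul_continuousOn (continuousOn_inv₀.mono fun x hx => ?_)
  exact (hp.trans_le (uIcc_of_le hpq ▸ hx).1).ne'

lemma integral_const_div (c : ℝ) (hp : 0 < p) (hq : 0 < q) :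
    ∫ x in p..q, c / x = Real.log (q / p) * c := by
  simp only [div_eq_mul_inv c, intervalIntegral.integral_const_mul, integral_inv_of_pos hp hq]
  exact mul_comm _ _

lemma log_div_mul_le_integral_div (hg : MonotoneOn g (Icc p q)) (hp : 0 < p) (hpq : p ≤ q) :
    Real.log (q / p) * g p ≤ ∫ x in p..q, g x / x := by
  rw [← integral_const_div _ hp (hp.trans_le hpq)]
  refine intervalIntegral.integral_mono_on hpq
    (intervalIntegrable_div_of_monotoneOn monotoneOn_const hp hpq)
    (intervalIntegrable_div_of_monotoneOn hg hp hpq) fun x hx => ?_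
  exact div_le_div_of_nonneg_right (hg (left_mem_Icc.2 hpq) hx hx.1) (hp.trans_le hx.1).le

lemma integral_div_le_log_div_mul (hg : MonotoneOn g (Icc p q)) (hp : 0 < p) (hpq : p ≤ q) :
    ∫ x in p..q, g x / x ≤ Real.log (q / p) * g q := by
  rw [← integral_const_div _ hp (hp.trans_le hpq)]
  refine intervalIntegral.integral_mono_on hpq
    (intervalIntegrable_div_of_monotoneOn hg hp hpq)
    (intervalIntegrable_div_of_monotoneOn monotoneOn_const hp hpq) fun x hx => ?_
  exact div_le_div_of_nonneg_right (hg hx (right_mem_Icc.2 hpq) hx.2) (hp.trans_le hx.1).le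

end MonotoneOn

/-- The `μ`-mass of `g` on `[1/t, 1]`; for a positive integer `t` this is the set of points which
the Farey map takes to `A₁` within `t - 1` steps. -/
noncomputable def truncatedMass (g : ℝ → ℝ) (t : ℝ) : ℝ := ∫ x in t⁻¹..1, g x / x

lemma truncatedMass_le_log_mul {g : ℝ → ℝ} {t : ℝ} (hg : MonotoneOn g (Ioc 0 1)) (ht : 1 ≤ t) :
    truncatedMass g t ≤ Real.log t * g 1 := by
  have ht0 : 0 < t⁻¹ := by positivity
  have h := integral_div_le_log_div_mul (hg.mono (Icc_subset_Ioc ht0 le_rfl)) ht0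
    (inv_le_one_of_one_le₀ ht)
  rwa [div_inv_eq_mul, one_mul] at h

lemma truncatedMass_fareyTransfer {g : ℝ → ℝ} {t : ℝ} (hg : ContinuousOn g (Ioo 0 1))
    (ht : 0 < t) :
    truncatedMass (fareyTransfer g) t = ∫ x in (t + 1)⁻¹..(t / (t + 1)), g x / x := by
  have hleft : t⁻¹ / (t⁻¹ + 1) = (t + 1)⁻¹ := by field_simp; ring
  have hright : 1 / (t⁻¹ + 1) = t / (t + 1) := by field_simp; ring
  rw [truncatedMass, integral_fareyTransfer_div_one hg (inv_pos.2 ht), hleft, hright]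

namespace IsMonotoneConcaveOn

variable {g : ℝ → ℝ} {t : ℝ}

lemma continuousOn_Ioo (hg : IsMonotoneConcaveOn g (Ioo 0 1)) : ContinuousOn g (Ioo 0 1) :=
  hg.concaveOn.continuousOn isOpen_Ioo

lemma truncatedMass_add_one (hg : IsMonotoneConcaveOn g (Ioc 0 1)) (ht : 0 < t) :
    truncatedMass g (t + 1) =
      truncatedMass (fareyTransfer g) t + ∫ x in (t / (t + 1))..1, g x / x := by
  have hp := div_add_one_mem_Ioo ht
  have hcont := hg.Ioo_of_Ioc.continuousOn_Ioo
  have hinv : (t + 1)⁻¹ ∈ Ioo (0 : ℝ) 1 := by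
    rw [← one_div, ← one_sub_div_add_one (by positivity)]
    exact one_sub_mem_Ioo hp
  rw [truncatedMass_fareyTransfer hcont ht, intervalIntegral.integral_add_adjacent_intervals
    (intervalIntegrable_div_of_continuousOn hcont hinv hp)
    (intervalIntegrable_div_of_monotoneOn (hg.monotoneOn.mono (Icc_subset_Ioc hp.1 le_rfl)) hp.1
      hp.2.le), truncatedMass]

lemma truncatedMass_fareyTransfer_add_le (hg : IsMonotoneConcaveOn g (Ioc 0 1)) (ht : 1 ≤ t) :
    truncatedMass (fareyTransfer g) t + Real.log ((t + 1) / t) * fareyTransfer g 1 ≤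
      truncatedMass g (t + 1) := by
  have ht0 : 0 < t := one_pos.trans_le ht
  have hp := div_add_one_mem_Ioo ht0
  have hhalf : 1 / 2 ≤ t / (t + 1) := by
    rw [div_le_div_iff₀ two_pos (by positivity)]
    linarith
  have hlog : 0 ≤ Real.log ((t + 1) / t) :=
    Real.log_nonneg ((one_le_div ht0).2 (by linarith))
  rw [hg.truncatedMass_add_one ht0, fareyTransfer_one]
  gcongr
  calc Real.log ((t + 1) / t) * g (1 / 2)
      ≤ Real.log ((t + 1) / t) * g (t / (t + 1)) := by
        gcongr
        exact hg.monotoneOn (by norm_num) (Ioo_subset_Ioc_self hp) hhalf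
    _ = Real.log (1 / (t / (t + 1))) * g (t / (t + 1)) := by rw [one_div_div]
    _ ≤ ∫ x in (t / (t + 1))..1, g x / x :=
        log_div_mul_le_integral_div (hg.monotoneOn.mono (Icc_subset_Ioc hp.1 le_rfl)) hp.1 hp.2.le

lemma truncatedMass_add_one_le (hg : IsMonotoneConcaveOn g (Ioc 0 1)) (ht : 0 < t) :
    truncatedMass g (t + 1) ≤ truncatedMass (fareyTransfer g) t + t⁻¹ * g 1 := by
  have hp := div_add_one_mem_Ioo ht
  have hlog : Real.log ((t + 1) / t) ≤ t⁻¹ := by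
    refine (Real.log_le_sub_one_of_pos (by positivity)).trans_eq ?_
    field_simp
    ring
  rw [hg.truncatedMass_add_one ht]
  gcongr
  calc ∫ x in (t / (t + 1))..1, g x / x
      ≤ Real.log (1 / (t / (t + 1))) * g 1 :=
        integral_div_le_log_div_mul (hg.monotoneOn.mono (Icc_subset_Ioc hp.1 le_rfl)) hp.1 hp.2.le
    _ = Real.log ((t + 1) / t) * g 1 := by rw [one_div_div]
    _ ≤ t⁻¹ * g 1 := mul_le_mul_of_nonneg_right hlog hg.one_nonneg

lemma log_mul_iterate_one_le_truncatedMass (hg : IsMonotoneConcaveOn g (Ioc 0 1)) (n : ℕ) :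
    Real.log (n + 1) * fareyTransfer^[n] g 1 ≤ truncatedMass g (n + 1) := by
  induction n generalizing g with
  | zero => simp [truncatedMass]
  | succ n ih =>
    have hTg := isMonotoneConcaveOn_fareyTransfer hg.Ioo_of_Ioc
    have hn : (1 : ℝ) ≤ n + 1 := by simp
    have hn' : (0 : ℝ) < n + 1 := by positivity
    have hlog : 0 ≤ Real.log ((n + 1 + 1) / (n + 1)) :=
      Real.log_nonneg ((one_le_div hn').2 (by linarith))
    have hanti : fareyTransfer^[n] (fareyTransfer g) 1 ≤ fareyTransfer g 1 :=
      hTg.antitone_iterate_fareyTransfer_one (Nat.zero_le n)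
    rw [Function.iterate_succ_apply, Nat.cast_succ]
    calc Real.log (n + 1 + 1) * fareyTransfer^[n] (fareyTransfer g) 1
        = Real.log (n + 1) * fareyTransfer^[n] (fareyTransfer g) 1 +
            Real.log ((n + 1 + 1) / (n + 1)) * fareyTransfer^[n] (fareyTransfer g) 1 := by
          rw [Real.log_div (by positivity) hn'.ne']
          ring
      _ ≤ truncatedMass (fareyTransfer g) (n + 1) +
            Real.log ((n + 1 + 1) / (n + 1)) * fareyTransfer g 1 :=
          add_le_add (ih hTg) (mul_le_mul_of_nonneg_left hanti hlog)
      _ ≤ truncatedMass g (n + 1 + 1) := hg.truncatedMass_fareyTransfer_add_le hn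

lemma truncatedMass_add_natCast_le (hg : IsMonotoneConcaveOn g (Ioc 0 1)) (ht : 0 < t) (n : ℕ) :
    truncatedMass g (t + n) ≤ truncatedMass (fareyTransfer^[n] g) t +
      t⁻¹ * ∑ j ∈ Finset.range n, fareyTransfer^[j] g 1 := by
  induction n generalizing g with
  | zero => simp
  | succ n ih =>
    have hTg := isMonotoneConcaveOn_fareyTransfer hg.Ioo_of_Ioc
    have hinv : (t + n)⁻¹ ≤ t⁻¹ := inv_anti₀ ht (by simp)
    rw [Nat.cast_succ, ← add_assoc, Function.iterate_succ_apply, Finset.sum_range_succ', mul_add,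
      ← add_assoc]
    exact (hg.truncatedMass_add_one_le (by positivity)).trans
      (add_le_add (ih hTg) (mul_le_mul_of_nonneg_right hinv hg.one_nonneg))

variable {L : ℝ}

lemma tendsto_iterate_one (hg : IsMonotoneConcaveOn g (Ioc 0 1))
    (hL : Tendsto (truncatedMass g) atTop (𝓝 L)) :
    Tendsto (fun n => fareyTransfer^[n] g 1) atTop (𝓝 0) := by
  have hn : Tendsto (fun n : ℕ => (n : ℝ) + 1) atTop atTop :=
    tendsto_atTop_add_const_right _ 1 tendsto_natCast_atTop_atTop
  have hlog := Real.tendsto_log_atTop.comp hn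
  refine squeeze_zero' (Eventually.of_forall fun n => (hg.iterate_fareyTransfer n).one_nonneg) ?_
    ((hL.comp hn).div_atTop hlog)
  filter_upwards [hlog.eventually_gt_atTop 0] with n hpos
  rw [le_div_iff₀' hpos]
  exact hg.log_mul_iterate_one_le_truncatedMass n

lemma tendsto_log_mul_iterate_one (hg : IsMonotoneConcaveOn g (Ioc 0 1))
    (hL : Tendsto (truncatedMass g) atTop (𝓝 L)) :
    Tendsto (fun n : ℕ => Real.log (n + 1) * fareyTransfer^[n] g 1) atTop (𝓝 L) := by
  have hn : Tendsto (fun n : ℕ => (n : ℝ) + 1) atTop atTop :=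
    tendsto_atTop_add_const_right _ 1 tendsto_natCast_atTop_atTop
  have herror : Tendsto (fun n : ℕ => (n : ℝ)⁻¹ * ∑ j ∈ Finset.range n, fareyTransfer^[j] g 1)
      atTop (𝓝 0) :=
    (hg.tendsto_iterate_one hL).cesaro
  have hlower := (hL.comp (hn.atTop_add_atTop tendsto_natCast_atTop_atTop)).sub herror
  rw [sub_zero] at hlower
  refine tendsto_of_tendsto_of_tendsto_of_le_of_le' hlower (hL.comp hn) ?_
    (Eventually.of_forall hg.log_mul_iterate_one_le_truncatedMass)
  filter_upwards [eventually_gt_atTop 0] with n hn0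
  have hsum : 0 ≤ ∑ j ∈ Finset.range n, fareyTransfer^[j] g 1 :=
    Finset.sum_nonneg fun j _ => (hg.iterate_fareyTransfer j).one_nonneg
  have hinv : ((n : ℝ) + 1)⁻¹ ≤ (n : ℝ)⁻¹ := inv_anti₀ (by positivity) (by simp)
  rw [Function.comp_apply, sub_le_iff_le_add]
  calc truncatedMass g (n + 1 + n)
      ≤ truncatedMass (fareyTransfer^[n] g) (n + 1) +
          ((n : ℝ) + 1)⁻¹ * ∑ j ∈ Finset.range n, fareyTransfer^[j] g 1 :=
        hg.truncatedMass_add_natCast_le (by positivity) n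
    _ ≤ Real.log (n + 1) * fareyTransfer^[n] g 1 +
          (n : ℝ)⁻¹ * ∑ j ∈ Finset.range n, fareyTransfer^[j] g 1 :=
        add_le_add (truncatedMass_le_log_mul (hg.iterate_fareyTransfer n).monotoneOn (by simp))
          (mul_le_mul_of_nonneg_right hinv hsum)

end IsMonotoneConcaveOn

lemma toReal_ofReal_one_div_smul_ae_eq (f : ℝ → ℝ) :
    (fun x => (ENNReal.ofReal (1 / x)).toReal • f x) =ᵐ[volume.restrict (Icc 0 1)]
      fun x => f x / x := by
  filter_upwards [ae_restrict_mem measurableSet_Icc] with x hx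
  rw [ENNReal.toReal_ofReal (one_div_nonneg.2 hx.1), smul_eq_mul, one_div_mul_eq_div]

lemma integral_fareyMeasure (f : ℝ → ℝ) : ∫ x, f x ∂fareyMeasure = ∫ x in Ioo 0 1, f x / x := by
  rw [fareyMeasure, integral_withDensity_eq_integral_toReal_smul (by fun_prop)
    (Eventually.of_forall fun _ => ENNReal.ofReal_lt_top),
    integral_congr_ae (toReal_ofReal_one_div_smul_ae_eq f), integral_Icc_eq_integral_Ioo]

lemma integrable_fareyMeasure_iff {f : ℝ → ℝ} :
    Integrable f fareyMeasure ↔ IntegrableOn (fun x => f x / x) (Ioo 0 1) := by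
  rw [fareyMeasure, integrable_withDensity_iff_integrable_smul' (by fun_prop)
    (Eventually.of_forall fun _ => ENNReal.ofReal_lt_top),
    integrable_congr (toReal_ofReal_one_div_smul_ae_eq f), ← IntegrableOn,
    integrableOn_Icc_iff_integrableOn_Ioo]

lemma tendsto_truncatedMass_fareyTransfer {f : ℝ → ℝ} (hf : ContinuousOn f (Ioo 0 1))
    (hf_int : Integrable f fareyMeasure) :
    Tendsto (truncatedMass (fareyTransfer f)) atTop (𝓝 (∫ x, f x ∂fareyMeasure)) := by
  have hleft : Tendsto (fun t : ℝ => (t + 1)⁻¹) atTop (𝓝 0) :=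
    tendsto_inv_atTop_zero.comp (tendsto_atTop_add_const_right _ 1 tendsto_id)
  have hright : Tendsto (fun t : ℝ => t / (t + 1)) atTop (𝓝 1) := by
    have h := hleft.const_sub 1
    rw [sub_zero] at h
    refine h.congr' ?_
    filter_upwards [eventually_gt_atTop 0] with t ht
    rw [← one_div, ← one_sub_div_add_one (by positivity), sub_sub_cancel]
  rw [integral_fareyMeasure]
  refine ((aecover_Ioo_of_Ioc hleft hright).integral_tendsto_of_countably_generated
    (integrable_fareyMeasure_iff.1 hf_int)).congr' ?_
  filter_upwards [eventually_ge_atTop 1] with t ht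
  have ht0 : 0 < t := one_pos.trans_le ht
  have hinv_le : (t + 1)⁻¹ ≤ t / (t + 1) := by
    rw [← one_div]
    gcongr
  rw [truncatedMass_fareyTransfer hf ht0, intervalIntegral.integral_of_le hinv_le,
    Measure.restrict_restrict_of_subset fun x hx => ?_]
  exact ⟨(by positivity : 0 < (t + 1)⁻¹).trans hx.1, hx.2.trans_lt (div_add_one_mem_Ioo ht0).2⟩

lemma tendstoUniformlyOn_log_mul_iterate {f : ℝ → ℝ} (hf : IsMonotoneConcaveOn f (Ioo 0 1))
    (hf_int : Integrable f fareyMeasure) :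
    TendstoUniformlyOn (fun (n : ℕ) x => Real.log (n + 2) * fareyTransfer^[n] f x)
      (fun _ => ∫ x, f x ∂fareyMeasure) atTop (Icc (1 / 2) 1) := by
  have hTf := isMonotoneConcaveOn_fareyTransfer hf
  have hshift : Tendsto (fun n : ℕ => Real.log (n + 1) * fareyTransfer^[n + 1] f 1) atTop
      (𝓝 (∫ x, f x ∂fareyMeasure)) :=
    hTf.tendsto_log_mul_iterate_one (tendsto_truncatedMass_fareyTransfer hf.continuousOn_Ioo hf_int)
  have hone : Tendsto (fun n : ℕ => Real.log n * fareyTransfer^[n] f 1) atTop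
      (𝓝 (∫ x, f x ∂fareyMeasure)) :=
    (tendsto_add_atTop_iff_nat 1).1 (by simpa only [Nat.cast_succ] using hshift)
  have hhalf : Tendsto (fun n : ℕ => Real.log (n + 2) * fareyTransfer^[n] f (1 / 2)) atTop
      (𝓝 (∫ x, f x ∂fareyMeasure)) := by
    refine ((tendsto_log_natCast_add_mul hone 1).comp (tendsto_add_atTop_nat 1)).congr fun n => ?_
    rw [Function.comp_apply, Function.iterate_succ_apply', fareyTransfer_one, Nat.cast_succ,
      add_assoc, one_add_one_eq_two]
  have hmono : ∀ᶠ n in atTop, MonotoneOn (fareyTransfer^[n] f) (Ioc 0 1) := by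
    filter_upwards [eventually_gt_atTop 0] with n hn
    obtain ⟨m, rfl⟩ := Nat.exists_eq_succ_of_ne_zero hn.ne'
    exact (hTf.iterate_fareyTransfer m).monotoneOn
  have hlog : ∀ n : ℕ, 0 ≤ Real.log ((n : ℝ) + 2) := fun n =>
    Real.log_nonneg (by linarith [Nat.cast_nonneg (α := ℝ) n])
  have hsub : Icc (1 / 2 : ℝ) 1 ⊆ Ioc 0 1 := Icc_subset_Ioc (by norm_num) le_rfl
  refine tendstoUniformlyOn_const_of_le_of_le hhalf (tendsto_log_natCast_add_mul hone 2) ?_ ?_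
  · filter_upwards [hmono] with n hn x hx
    exact mul_le_mul_of_nonneg_left (hn (by norm_num) (hsub hx) hx.1) (hlog n)
  · filter_upwards [hmono] with n hn x hx
    exact mul_le_mul_of_nonneg_left (hn (hsub hx) (by norm_num) hx.2) (hlog n)

theorem A1_uniformly_returning_general {f : ℝ → ℝ} (hf : IsMonotoneConcaveOn f (Ioo 0 1))
    (hf_int : Integrable f fareyMeasure) :
    ∃ b : ℕ → ℝ, (∀ n, 0 < b n) ∧ Monotone b ∧
      Tendsto (fun n : ℕ => b n / Real.log n) atTop (𝓝 1) ∧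
      TendstoUniformlyOn (fun n x => b n * fareyTransfer^[n] f x) (fun _ => ∫ x, f x ∂fareyMeasure)
        atTop (Icc (1 / 2) 1) := by
  have hlog_pos : ∀ n : ℕ, 0 < Real.log ((n : ℝ) + 2) := fun n =>
    Real.log_pos (by linarith [Nat.cast_nonneg (α := ℝ) n])
  have hlog_mono : Monotone fun n : ℕ => Real.log ((n : ℝ) + 2) := fun m n hmn => by
    dsimp only
    gcongr
  exact ⟨_, hlog_pos, hlog_mono, tendsto_log_natCast_add_div_log 2,
    tendstoUniformlyOn_log_mul_iterate hf hf_int⟩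

end

/-- The set `A₁ = (1/2,1]` is uniformly returning (for the Farey map) for every `f` in
the class `D`: there is a positive increasing sequence `bₙ ∼ log n` with
`bₙ · T̂ⁿ f → 1` uniformly on `A₁` (off a null set). -/
theorem A1_uniformly_returning (f : ℝ → ℝ)
    (hf_nonneg : ∀ x ∈ Set.Ioo (0 : ℝ) 1, 0 ≤ f x)
    (hf_density : ∫ x, f x ∂fareyMeasure = 1)
    (hf_smooth : ContDiffOn ℝ 2 f (Set.Ioo (0 : ℝ) 1))
    (hf_deriv : ∀ x ∈ Set.Ioo (0 : ℝ) 1, 0 < deriv f x)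
    (hf_deriv2 : ∀ x ∈ Set.Ioo (0 : ℝ) 1, deriv (deriv f) x ≤ 0) :
    ∃ b : ℕ → ℝ, (∀ n, 0 < b n) ∧ Monotone b ∧
      Tendsto (fun n : ℕ => b n / Real.log n) atTop (nhds 1) ∧
      ∃ N : Set ℝ, fareyMeasure N = 0 ∧
        TendstoUniformlyOn (fun n x => b n * (fareyTransfer^[n] f) x)
          (fun _ => 1) atTop (Set.Ioc (1 / 2 : ℝ) 1 \ N) := by
  have hf : IsMonotoneConcaveOn f (Set.Ioo 0 1) := isMonotoneConcaveOn_of_deriv isOpen_Ioo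
    (convex_Ioo 0 1) hf_smooth hf_nonneg (fun x hx => (hf_deriv x hx).le) hf_deriv2
  obtain ⟨b, hb_pos, hb_mono, hb_log, hb⟩ := A1_uniformly_returning_general hf
    (.of_integral_ne_zero (hf_density ▸ one_ne_zero))
  rw [hf_density] at hb
  exact ⟨b, hb_pos, hb_mono, hb_log, ∅, measure_empty,
    hb.mono (Set.sdiff_subset.trans Set.Ioc_subset_Icc_self)⟩
end
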